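/- arXiv:0912.0405 — 5 statements merged into one kernel-verified Lean document; each statement's English description precedes it below -/
import Mathlib

section
/- Let s = (β_1, β_2) ∈ B_4^2 be a degree 4, length 2 braid system whose Hurwitz orbit s·B_2 is finite. Then #(s·B_2) ≤ 8. -/
open FreeGroup in
/-- The braid relations on `m` strands (generators indexed 0-based by `Fin (m-1)`). -/
def braidRels (m : ℕ) : Set (FreeGroup (Fin (m - 1))) :=
  {r | ∃ i j : Fin (m - 1), (i.val + 2 ≤ j.val ∨ j.val + 2 ≤ i.val) ∧
        r = of i * of j * (of j * of i)⁻¹} ∪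
  {r | ∃ i j : Fin (m - 1), (i.val + 1 = j.val ∨ j.val + 1 = i.val) ∧
        r = of i * of j * of i * (of j * of i * of j)⁻¹}

/-- The braid group on `m` strands. -/
abbrev BraidGroup (m : ℕ) := PresentedGroup (braidRels m)

/-- The Artin generator `σ_i` (1-based index `1 ≤ i ≤ m-1`); junk value `1` out of range. -/
def braidGen (m : ℕ) (i : ℕ) : BraidGroup m :=
  if h : 1 ≤ i ∧ i ≤ m - 1 then PresentedGroup.of ⟨i - 1, by omega⟩ else 1

/-- A braid is periodic if some positive power of it is central. -/
def IsPeriodic {m : ℕ} (β : BraidGroup m) : Prop :=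
  ∃ k : ℕ, 1 ≤ k ∧ β ^ k ∈ Subgroup.center (BraidGroup m)

/-- The elementary Hurwitz move at (0-based) position `i`, as a bijection on `n`-tuples. -/
def hEquiv {G : Type*} [Group G] {n : ℕ} (i : Fin (n - 1)) : Equiv.Perm (Fin n → G) where
  toFun s := fun k =>
    if k.val = i.val then s ⟨i.val + 1, by have := i.isLt; omega⟩
    else if k.val = i.val + 1 then
      (s ⟨i.val + 1, by have := i.isLt; omega⟩)⁻¹ * s ⟨i.val, by have := i.isLt; omega⟩ *
        s ⟨i.val + 1, by have := i.isLt; omega⟩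
    else s k
  invFun t := fun k =>
    if k.val = i.val then
      t ⟨i.val, by have := i.isLt; omega⟩ * t ⟨i.val + 1, by have := i.isLt; omega⟩ *
        (t ⟨i.val, by have := i.isLt; omega⟩)⁻¹
    else if k.val = i.val + 1 then t ⟨i.val, by have := i.isLt; omega⟩
    else t k
  left_inv s := by
    funext k
    have hlt := i.isLt
    rcases k with ⟨kv, hkv⟩
    by_cases h1 : kv = i.val
    · subst h1
      simp [mul_assoc]
    · by_cases h2 : kv = i.val + 1
      · subst h2
        simp
      · simp [h1, h2]
  right_inv t := by
    funext k
    have hlt := i.isLt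
    rcases k with ⟨kv, hkv⟩
    by_cases h1 : kv = i.val
    · subst h1
      simp [mul_assoc]
    · by_cases h2 : kv = i.val + 1
      · subst h2
        simp [mul_assoc]
      · simp [h1, h2]

/-- The (right) Hurwitz action of a word in the generators `σ_1, …, σ_{n-1}` of `B_n`
on `n`-tuples of elements of a group `G`: `hurwitzAct (w₁ * w₂) s = hurwitzAct w₂ (hurwitzAct w₁ s)`. -/
def hurwitzAct {G : Type*} [Group G] {n : ℕ} (w : FreeGroup (Fin (n - 1))) (s : Fin n → G) :
    Fin n → G :=
  (MulOpposite.unop (FreeGroup.lift (fun i => MulOpposite.op (hEquiv (G := G) (n := n) i)) w)) s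

/-- The Hurwitz orbit of a braid system. -/
def hurwitzOrbit {G : Type*} [Group G] {n : ℕ} (s : Fin n → G) : Set (Fin n → G) :=
  {t | ∃ w : FreeGroup (Fin (n - 1)), hurwitzAct w s = t}

/-- The generator `σ_i` (1-based) as a word acting on length-`n` systems. -/
def genWord (n : ℕ) (i : ℕ) : FreeGroup (Fin (n - 1)) :=
  if h : 1 ≤ i ∧ i ≤ n - 1 then FreeGroup.of ⟨i - 1, by omega⟩ else 1

/-- The pure braid word `c_i = (σ_1⁻¹ ⋯ σ_{i-1}⁻¹) σ_i² (σ_{i-1} ⋯ σ_1)`. -/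
def cWord (n : ℕ) (i : ℕ) : FreeGroup (Fin (n - 1)) :=
  ((List.range (i - 1)).map (fun t => (genWord n (t + 1))⁻¹)).prod *
    genWord n i ^ 2 *
    ((List.range (i - 1)).reverse.map (fun t => genWord n (t + 1))).prod

/-- The word `Δ_{(i,j)} = (σ_i σ_{i+1} ⋯ σ_j)(σ_i ⋯ σ_{j-1}) ⋯ (σ_i σ_{i+1})(σ_i)`. -/
def deltaWord (n i j : ℕ) : FreeGroup (Fin (n - 1)) :=
  ((List.range (j - i + 1)).map (fun t =>
    ((List.range (j - t - i + 1)).map (fun u => genWord n (i + u))).prod)).prod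

/-- The exponent-sum homomorphism, valued in `Multiplicative ℤ`. -/
def expSumHom {m : ℕ} : BraidGroup m →* Multiplicative ℤ :=
  PresentedGroup.toGroup (f := fun _ => Multiplicative.ofAdd 1) (by
    rintro r (⟨i, j, -, rfl⟩ | ⟨i, j, -, rfl⟩) <;>
      simp <;> group)

/-- The exponent sum of a braid: `e(σ_i) = 1`. -/
def esum {m : ℕ} (β : BraidGroup m) : ℤ := Multiplicative.toAdd (expSumHom β)

/-- A braid system is reducible if some non-trivial partition of the index set has all
entries from the two parts commuting. -/
def IsReducible {G : Type*} [Group G] {n : ℕ} (s : Fin n → G) : Prop :=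
  ∃ I : Set (Fin n), I.Nonempty ∧ Iᶜ.Nonempty ∧ ∀ i ∈ I, ∀ j ∈ Iᶜ, Commute (s i) (s j)

namespace HurwitzAux

open Polynomial

/-! ### A faithful unipotent representation of the free group of rank three -/

/-- The representation space. -/
abbrev V := ℚ[X] × ℚ[X]

/-- The symplectic pairing of a constant vector with a vector of `V`. -/
noncomputable def om (u : ℚ × ℚ) (w : V) : ℚ[X] := C u.1 * w.2 - C u.2 * w.1

/-- The transvection in direction `u`. -/
noncomputable def tv (u : ℚ × ℚ) (n : ℤ) : Module.End ℚ V where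
  toFun w := (w.1 + C ((n : ℚ) * u.1) * (X * om u w), w.2 + C ((n : ℚ) * u.2) * (X * om u w))
  map_add' w w' := by
    ext1 <;> simp [om] <;> ring
  map_smul' c w := by
    ext1 <;> simp [om, smul_eq_C_mul] <;> ring

lemma om_tv (u u' : ℚ × ℚ) (n : ℤ) (w : V) :
    om u' (tv u n w) = om u' w + C ((n : ℚ) * (u'.1 * u.2 - u'.2 * u.1)) * (X * om u w) := by
  simp [om, tv]; ring

/-- Transvections as a one-parameter group. -/
noncomputable def tvHom (u : ℚ × ℚ) : Multiplicative ℤ →* (Module.End ℚ V)ˣ :=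
  MonoidHom.toHomUnits
    { toFun := fun n => tv u n.toAdd
      map_one' := by
        ext1 <;> ext1 <;> ext1 <;> simp [tv]
      map_mul' := fun a b => by
        refine LinearMap.ext fun w => ?_
        have h := om_tv u u b.toAdd w
        ext1 <;> simp [Module.End.mul_apply, tv, om] <;> ring }

lemma tvHom_apply (u : ℚ × ℚ) (n : Multiplicative ℤ) (w : V) :
    tvHom u n • w = tv u n.toAdd w := rfl

/-- The three directions. -/
def dir : Fin 3 → ℚ × ℚ := ![(1, 0), (0, 1), (1, 1)]

/-- The representation. -/
noncomputable def rho : FreeGroup (Fin 3) →* (Module.End ℚ V)ˣ :=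
  FreeGroup.lift fun i => tvHom (dir i) (Multiplicative.ofAdd 1)

/-- ping-pong sets -/
def pp (i : Fin 3) : Set V := {w | ∀ j, j ≠ i → (om (dir i) w).degree < (om (dir j) w).degree}

lemma degree_aux (p q : ℚ[X]) (c : ℚ) (hc : c ≠ 0) (hq : q ≠ 0) (hpq : p.degree ≤ q.degree) :
    q.degree < (p + C c * (X * q)).degree := by
  have h1 : (C c * (X * q)).degree = q.degree + 1 := by
    rw [degree_C_mul hc, mul_comm, degree_mul, degree_X]
  have h2 : q.degree < q.degree + 1 := by
    rw [degree_eq_natDegree hq]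
    exact_mod_cast Nat.lt_succ_self _
  rw [degree_add_eq_right_of_degree_lt, h1]
  · exact h2
  · rw [h1]; exact lt_of_le_of_lt hpq h2

lemma cdeg (a : ℚ) (p : ℚ[X]) : (C a * p).degree ≤ p.degree := by
  rw [← smul_eq_C_mul]; exact degree_smul_le a p

lemma om_rel (i j l : Fin 3) (hij : i ≠ j) (hl : l ≠ i) (w : V)
    (h : (om (dir j) w).degree ≤ (om (dir i) w).degree) :
    (om (dir l) w).degree ≤ (om (dir i) w).degree := by
  by_cases hlj : l = j
  · subst hlj; exact h
  have key : ∃ a b : ℚ, om (dir l) w = C a * om (dir i) w + C b * om (dir j) w := by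
    fin_cases i <;> fin_cases j <;> fin_cases l <;> simp at hij hl hlj <;> simp only [dir, om]
    · exact ⟨1, 1, by simp; try ring⟩
    · exact ⟨-1, 1, by simp; try ring⟩
    · exact ⟨1, 1, by simp; try ring⟩
    · exact ⟨-1, 1, by simp; try ring⟩
    · exact ⟨1, -1, by simp; try ring⟩
    · exact ⟨1, -1, by simp; try ring⟩
  obtain ⟨a, b, e⟩ := key
  rw [e]
  refine (degree_add_le _ _).trans (max_le ?_ ?_)
  · exact (cdeg a _)
  · exact (cdeg b _).trans h

lemma pp_step (i j : Fin 3) (hij : i ≠ j) (n : ℤ) (hn : n ≠ 0) (w : V) (hw : w ∈ pp j) :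
    tv (dir i) n w ∈ pp i := by
  intro l hl
  have h1 : (om (dir j) w).degree < (om (dir i) w).degree := hw i hij
  have h0 : om (dir i) w ≠ 0 := by
    rintro h; simp [h] at h1
  have h2 := om_rel i j l hij hl w h1.le
  rw [om_tv, om_tv]
  have e : om (dir i) w + C ((n : ℚ) * ((dir i).1 * (dir i).2 - (dir i).2 * (dir i).1)) *
    (X * om (dir i) w) = om (dir i) w := by
    rw [mul_comm (dir i).1]; simp
  rw [e]
  apply degree_aux _ _ _ _ h0 h2
  have hn' : (n : ℚ) ≠ 0 := by exact_mod_cast hn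
  refine mul_ne_zero hn' ?_
  fin_cases i <;> fin_cases l <;> simp [dir] at hl ⊢

lemma rho_injective : Function.Injective rho := by
  have : rho = (Monoid.CoprodI.lift fun i : Fin 3 =>
        (FreeGroup.lift fun _ => tvHom (dir i) (Multiplicative.ofAdd 1) : FreeGroup Unit →* _)).comp
        (@freeGroupEquivCoprodI (Fin 3)).toMonoidHom := by
    ext1 i
    simp [rho]
  rw [this, MonoidHom.coe_comp]
  refine Function.Injective.comp ?_ (MulEquiv.injective freeGroupEquivCoprodI)
  refine Monoid.CoprodI.lift_injective_of_ping_pong (α := V) _ ?_ pp ?_ ?_ ?_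
  · left; simp
  · intro i
    refine ⟨(C (dir i).1, C (dir i).2), ?_⟩
    intro j hj
    have e : om (dir i) (C (dir i).1, C (dir i).2) = 0 := by simp [om]; ring
    rw [e, degree_zero, bot_lt_iff_ne_bot, Ne, degree_eq_bot]
    fin_cases i <;> fin_cases j <;> simp [dir, om] at hj ⊢
  · intro i j hij
    refine Set.disjoint_left.mpr fun w h1 h2 => ?_
    exact lt_asymm (h1 j hij.symm) (h2 i hij)
  · intro i j hij h hh
    rintro _ ⟨w, hw, rfl⟩
    obtain ⟨n, rfl⟩ : ∃ n : ℤ, h = FreeGroup.of () ^ n :=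
      ⟨FreeGroup.freeGroupUnitEquivInt h, (FreeGroup.freeGroupUnitEquivInt.left_inv h).symm⟩
    have hn : n ≠ 0 := by rintro rfl; simp at hh
    simp only [map_zpow, FreeGroup.lift_apply_of]
    rw [← map_zpow, tvHom_apply]
    apply pp_step i j hij _ _ _ hw
    simpa using hn

/-- The filtration of `V`. -/
def fil (n : ℕ) : Submodule ℚ V where
  carrier := {w | (X : ℚ[X]) ^ n ∣ w.1 ∧ (X : ℚ[X]) ^ n ∣ w.2}
  add_mem' h h' := ⟨dvd_add h.1 h'.1, dvd_add h.2 h'.2⟩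
  zero_mem' := ⟨dvd_zero _, dvd_zero _⟩
  smul_mem' c w h := by
    simp only [Set.mem_ofPred_eq, Prod.smul_fst, Prod.smul_snd, smul_eq_C_mul]
    exact ⟨h.1.mul_left _, h.2.mul_left _⟩

lemma tv_fil (u : ℚ × ℚ) (n : ℤ) (m : ℕ) (w : V) (hw : w ∈ fil m) :
    tv u n w - w ∈ fil (m + 1) := by
  have h : (X : ℚ[X]) ^ m ∣ om u w := dvd_sub (hw.2.mul_left _) (hw.1.mul_left _)
  have h' : (X : ℚ[X]) ^ (m + 1) ∣ X * om u w := by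
    rw [pow_succ']; exact mul_dvd_mul_left _ h
  constructor <;> simp only [tv, LinearMap.coe_mk, AddHom.coe_mk, Prod.fst_sub, Prod.snd_sub, add_sub_cancel_left] <;>
    exact h'.mul_left _

lemma fil_succ_le (m : ℕ) : fil (m + 1) ≤ fil m := fun _ h =>
  ⟨(pow_dvd_pow _ (Nat.le_succ m)).trans h.1, (pow_dvd_pow _ (Nat.le_succ m)).trans h.2⟩

lemma rho_fil (g : FreeGroup (Fin 3)) : ∀ (m : ℕ) (w : V), w ∈ fil m →
    rho g • w - w ∈ fil (m + 1) := by
  induction g using FreeGroup.induction_on with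
  | C1 => intro m w _; simp
  | of i => intro m w hw; simpa [rho, tvHom_apply] using tv_fil _ 1 m w hw
  | inv_of i _ =>
    intro m w hw
    simp only [rho, map_inv, FreeGroup.lift_apply_of]
    rw [← map_inv, tvHom_apply]
    exact tv_fil _ _ m w hw
  | mul x y hx hy =>
    intro m w hw
    have h1 := hy m w hw
    have h2 : rho y • w ∈ fil m := by
      have := (fil m).add_mem (fil_succ_le m h1) hw
      simpa using this
    have h3 := hx m _ h2
    have := (fil (m+1)).add_mem h3 h1
    simpa [mul_smul] using this

lemma fil_inter (w : V) (h : ∀ n, w ∈ fil n) : w = 0 := by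
  have key : ∀ p : ℚ[X], (∀ n, X ^ n ∣ p) → p = 0 := by
    intro p hp
    ext n
    rw [(X_pow_dvd_iff.mp (hp (n+1))) n (Nat.lt_succ_self n)]
    simp
  ext1
  · exact key _ fun n => (h n).1
  · exact key _ fun n => (h n).2

end HurwitzAux
namespace HurwitzAux

/-! ### The group ring and its augmentation filtration -/

section GroupRing

open scoped commutatorElement

variable {F : Type} [Group F]

/-- The image of a group element in the group algebra. -/
noncomputable abbrev gr (g : F) : MonoidAlgebra ℚ F := MonoidAlgebra.of ℚ F g

lemma gr_one : gr (1 : F) = 1 := map_one _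

lemma gr_mul (g h : F) : gr (g * h) = gr g * gr h := map_mul _ _ _

/-- The augmentation ideal, as a subspace. -/
noncomputable def aug (F : Type) [Group F] : Submodule ℚ (MonoidAlgebra ℚ F) :=
  Submodule.span ℚ (Set.range fun g : F => gr g - 1)

lemma gr_sub_mem (g : F) : gr g - 1 ∈ aug F := Submodule.subset_span ⟨g, rfl⟩

lemma aug_mul_le : aug F * aug F ≤ aug F := by
  rw [aug, Submodule.span_mul_span, Submodule.span_le]
  rintro _ ⟨_, ⟨g, rfl⟩, _, ⟨h, rfl⟩, rfl⟩
  have e : (gr g - 1) * (gr h - 1) = (gr (g * h) - 1) - (gr g - 1) - (gr h - 1) := by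
    simp only [gr, map_mul]; noncomm_ring
  show (gr g - 1) * (gr h - 1) ∈ aug F
  rw [e]
  exact sub_mem (sub_mem (gr_sub_mem _) (gr_sub_mem _)) (gr_sub_mem _)

lemma aug_pow_succ_le (n : ℕ) : aug F ^ (n + 2) ≤ aug F ^ (n + 1) := by
  induction n with
  | zero => simpa [pow_two] using aug_mul_le
  | succ n ih =>
    rw [pow_succ (aug F) (n + 2), pow_succ (aug F) (n + 1)]
    exact mul_le_mul' ih le_rfl

lemma aug_two_mul_gr (z : MonoidAlgebra ℚ F) (hz : z ∈ aug F ^ 2) (k : F) :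
    z * gr k ∈ aug F ^ 2 := by
  have e : z * gr k = z * (gr k - 1) + z := by noncomm_ring
  rw [e]
  refine add_mem (aug_pow_succ_le 1 ?_) hz
  rw [pow_succ]
  exact Submodule.mul_mem_mul hz (gr_sub_mem k)

/-- The second dimension subgroup. -/
noncomputable def dimTwo (F : Type) [Group F] : Subgroup F where
  carrier := {g | gr g - 1 ∈ aug F ^ 2}
  one_mem' := by
    change gr 1 - 1 ∈ aug F ^ 2
    rw [gr_one, sub_self]; exact zero_mem _
  mul_mem' {a b} ha hb := by
    have e : gr (a * b) - 1 = (gr a - 1) * gr b + (gr b - 1) := by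
      simp only [gr, map_mul]; noncomm_ring
    change gr (a * b) - 1 ∈ aug F ^ 2
    rw [e]
    exact add_mem (aug_two_mul_gr _ ha b) hb
  inv_mem' {a} ha := by
    have e : gr a⁻¹ - 1 = - ((gr a - 1) * gr a⁻¹) := by
      have : gr a * gr a⁻¹ = 1 := by rw [← gr_mul, mul_inv_cancel, gr_one]
      rw [sub_mul, this]; noncomm_ring
    change gr a⁻¹ - 1 ∈ aug F ^ 2
    rw [e]
    exact neg_mem (aug_two_mul_gr _ ha _)

lemma commutator_le_dimTwo : commutator F ≤ dimTwo F := by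
  rw [commutator_def, Subgroup.commutator_le]
  intro g _ h _
  change gr ⁅g, h⁆ - 1 ∈ aug F ^ 2
  have e : gr ⁅g, h⁆ - 1 =
      ((gr g - 1) * (gr h - 1) - (gr h - 1) * (gr g - 1)) * gr (g⁻¹ * h⁻¹) := by
    have h1 : (gr g - 1) * (gr h - 1) - (gr h - 1) * (gr g - 1) = gr (g * h) - gr (h * g) := by
      simp only [gr, map_mul]; noncomm_ring
    rw [h1, sub_mul, ← map_mul, ← map_mul, commutatorElement_def]
    congr 2
    · group
    · rw [← map_one (MonoidAlgebra.of ℚ F)]; congr 1; group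
  rw [e]
  apply aug_two_mul_gr
  rw [pow_two]
  exact sub_mem (Submodule.mul_mem_mul (gr_sub_mem _) (gr_sub_mem _))
    (Submodule.mul_mem_mul (gr_sub_mem _) (gr_sub_mem _))

/-- The ring endomorphism induced by a group endomorphism. -/
noncomputable def indMap (φ : F →* F) : MonoidAlgebra ℚ F →ₐ[ℚ] MonoidAlgebra ℚ F :=
  MonoidAlgebra.lift ℚ (MonoidAlgebra ℚ F) F ((MonoidAlgebra.of ℚ F).comp φ)

lemma indMap_gr (φ : F →* F) (g : F) : indMap φ (gr g) = gr (φ g) := by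
  simp [indMap, gr]

lemma indMap_one_mem (φ : F →* F) (hφ : ∀ x, φ x * x⁻¹ ∈ commutator F)
    (z : MonoidAlgebra ℚ F) (hz : z ∈ aug F) :
    indMap φ z ∈ aug F ∧ indMap φ z - z ∈ aug F ^ 2 := by
  refine Submodule.span_induction ?_ ?_ ?_ ?_ hz
  · rintro _ ⟨g, rfl⟩
    simp only [map_sub, indMap_gr, map_one]
    refine ⟨gr_sub_mem _, ?_⟩
    have h := aug_two_mul_gr _ (commutator_le_dimTwo (hφ g)) g
    have e : gr (φ g) - 1 - (gr g - 1) = (gr (φ g * g⁻¹) - 1) * gr g := by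
      rw [sub_mul, ← map_mul]; simp
    rw [e]; exact h
  · simp
  · intro x y _ _ hx hy
    refine ⟨by rw [map_add]; exact add_mem hx.1 hy.1, ?_⟩
    have e : indMap φ (x + y) - (x + y) = (indMap φ x - x) + (indMap φ y - y) := by
      rw [map_add]; abel
    rw [e]; exact add_mem hx.2 hy.2
  · intro a x _ hx
    refine ⟨by rw [map_smul]; exact Submodule.smul_mem _ _ hx.1, ?_⟩
    rw [map_smul, ← smul_sub]; exact Submodule.smul_mem _ _ hx.2

lemma indMap_pow_mem (φ : F →* F) (hφ : ∀ x, φ x * x⁻¹ ∈ commutator F) (n : ℕ) :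
    ∀ z ∈ aug F ^ (n + 1), indMap φ z ∈ aug F ^ (n + 1) ∧ indMap φ z - z ∈ aug F ^ (n + 2) := by
  induction n with
  | zero =>
    intro z hz
    simpa using indMap_one_mem φ hφ z (by simpa using hz)
  | succ n ih =>
    intro z hz
    rw [pow_succ' (aug F) (n + 1)] at hz
    refine Submodule.mul_induction_on hz ?_ ?_
    · intro a ha b hb
      obtain ⟨a1, a2⟩ := indMap_one_mem φ hφ a ha
      obtain ⟨b1, b2⟩ := ih b hb
      constructor
      · rw [map_mul, pow_succ' (aug F) (n + 1)]; exact Submodule.mul_mem_mul a1 b1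
      · have e : indMap φ (a * b) - a * b =
          (indMap φ a - a) * indMap φ b + a * (indMap φ b - b) := by
          rw [map_mul]; noncomm_ring
        rw [e]
        refine add_mem ?_ ?_
        · have := Submodule.mul_mem_mul a2 b1
          rw [← pow_add] at this
          have e : 2 + (n + 1) = n + 1 + 2 := by ring
          rwa [e] at this
        · rw [pow_succ' (aug F) (n + 2)]; exact Submodule.mul_mem_mul ha b2
    · intro x y hx hy
      refine ⟨by rw [map_add]; exact add_mem hx.1 hy.1, ?_⟩
      have e : indMap φ (x + y) - (x + y) = (indMap φ x - x) + (indMap φ y - y) := by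
        rw [map_add]; abel
      rw [e]; exact add_mem hx.2 hy.2

/-- Twisted norms. -/
def tnorm (φ : F →* F) (d : F) : ℕ → F
  | 0 => 1
  | k + 1 => d * φ (tnorm φ d k)

lemma tnorm_mem (φ : F →* F) (hφ : ∀ x, φ x * x⁻¹ ∈ commutator F) (n : ℕ) (d : F)
    (hd : gr d - 1 ∈ aug F ^ (n + 1)) (k : ℕ) :
    gr (tnorm φ d k) - 1 ∈ aug F ^ (n + 1) ∧
      gr (tnorm φ d k) - 1 - (k : ℚ) • (gr d - 1) ∈ aug F ^ (n + 2) := by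
  induction k with
  | zero => rw [tnorm, gr_one]; simp
  | succ k ih =>
    obtain ⟨h1, h2⟩ := ih
    obtain ⟨h3, h4⟩ := indMap_pow_mem φ hφ n _ h1
    rw [map_sub, map_one, indMap_gr] at h3 h4
    have e : gr (tnorm φ d (k + 1)) - 1 = (gr d - 1) + (gr (φ (tnorm φ d k)) - 1)
        + (gr d - 1) * (gr (φ (tnorm φ d k)) - 1) := by
      simp only [tnorm, gr, map_mul]; noncomm_ring
    have h5 : (gr d - 1) * (gr (φ (tnorm φ d k)) - 1) ∈ aug F ^ (n + 2) := by
      rw [pow_succ (aug F) (n + 1)]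
      exact Submodule.mul_mem_mul hd (gr_sub_mem _)
    constructor
    · rw [e]; exact add_mem (add_mem hd h3) (aug_pow_succ_le n h5)
    · have e2 : gr (tnorm φ d (k + 1)) - 1 - ((k + 1 : ℕ) : ℚ) • (gr d - 1) =
        (gr (φ (tnorm φ d k)) - 1 - (gr (tnorm φ d k) - 1)) +
        (gr (tnorm φ d k) - 1 - (k : ℚ) • (gr d - 1)) +
        (gr d - 1) * (gr (φ (tnorm φ d k)) - 1) := by
        rw [e]; push_cast; rw [add_smul, one_smul]; abel
      rw [e2]
      exact add_mem (add_mem h4 h2) h5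

lemma mem_all_of_tnorm (φ : F →* F) (hφ : ∀ x, φ x * x⁻¹ ∈ commutator F) (d : F)
    (k : ℕ) (hk : k ≠ 0) (h : tnorm φ d k = 1) (n : ℕ) : gr d - 1 ∈ aug F ^ (n + 1) := by
  induction n with
  | zero => simpa using gr_sub_mem d
  | succ n ih =>
    have := (tnorm_mem φ hφ n d ih k).2
    rw [h] at this
    have hk' : (k : ℚ) ≠ 0 := by exact_mod_cast hk
    have e : gr d - 1 = (-(k : ℚ)⁻¹) • (gr (1 : F) - 1 - (k : ℚ) • (gr d - 1)) := by
      simp only [gr_one, sub_self, zero_sub, smul_neg, smul_smul]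
      rw [neg_mul, neg_smul, neg_neg, inv_mul_cancel₀ hk', one_smul]
    rw [e]
    exact Submodule.smul_mem _ _ this

end GroupRing

/-- The linear extension of a representation on `V`. -/
noncomputable def repMap {F : Type} [Group F] (r : F →* FreeGroup (Fin 3)) :
    MonoidAlgebra ℚ F →ₐ[ℚ] Module.End ℚ V :=
  MonoidAlgebra.lift ℚ (Module.End ℚ V) F ((Units.coeHom _).comp (rho.comp r))

lemma repMap_gr {F : Type} [Group F] (r : F →* FreeGroup (Fin 3)) (g : F) (w : V) :
    repMap r (gr g) w = rho (r g) • w := by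
  simp [repMap, gr]; rfl

lemma repMap_aug {F : Type} [Group F] (r : F →* FreeGroup (Fin 3)) (z : MonoidAlgebra ℚ F)
    (hz : z ∈ aug F) (m : ℕ) (w : V) (hw : w ∈ fil m) : repMap r z w ∈ fil (m + 1) := by
  refine Submodule.span_induction ?_ ?_ ?_ ?_ hz
  · rintro _ ⟨g, rfl⟩
    simp only [map_sub, map_one, LinearMap.sub_apply, Module.End.one_apply, repMap_gr]
    exact rho_fil _ m w hw
  · simp
  · intro x y _ _ hx hy
    rw [map_add]; exact add_mem hx hy
  · intro a x _ hx
    rw [map_smul]; exact Submodule.smul_mem _ _ hx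

lemma repMap_aug_pow {F : Type} [Group F] (r : F →* FreeGroup (Fin 3)) (n : ℕ) :
    ∀ z ∈ aug F ^ (n + 1), ∀ w, repMap r z w ∈ fil (n + 1) := by
  induction n with
  | zero =>
    intro z hz w
    exact repMap_aug r z (by simpa using hz) 0 w ⟨by simp, by simp⟩
  | succ n ih =>
    intro z hz w
    rw [pow_succ' (aug F) (n + 1)] at hz
    refine Submodule.mul_induction_on hz ?_ ?_
    · intro a ha b hb
      rw [map_mul]
      exact repMap_aug r a ha _ _ (ih b hb w)
    · intro x y hx hy
      rw [map_add]; exact add_mem hx hy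

/-- Triviality of elements of trivial twisted norm. -/
lemma eq_one_of_tnorm {F : Type} [Group F] (r : F →* FreeGroup (Fin 3))
    (hr : Function.Injective r) (φ : F →* F) (hφ : ∀ x, φ x * x⁻¹ ∈ commutator F) (d : F)
    (k : ℕ) (hk : k ≠ 0) (h : tnorm φ d k = 1) : d = 1 := by
  apply hr
  apply rho_injective
  rw [map_one, map_one]
  ext1
  refine LinearMap.ext fun w => ?_
  have h2 : rho (r d) • w - w = 0 := by
    apply fil_inter
    intro n
    have h1 := repMap_aug_pow r n _ (mem_all_of_tnorm φ hφ d k hk h n) w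
    simp only [map_sub, map_one, LinearMap.sub_apply, Module.End.one_apply, repMap_gr] at h1
    exact fil_succ_le _ h1
  exact sub_eq_zero.mp h2

/-- Unique roots modulo a normal free subgroup on whose abelianization we act trivially. -/
lemma root_unique {F E : Type} [Group F] [Group E] (r : F →* FreeGroup (Fin 3))
    (hr : Function.Injective r) (j : F →* E) (hj : Function.Injective j) (e : E) (φ : F →* F)
    (hφ : ∀ x, φ x * x⁻¹ ∈ commutator F) (he : ∀ x, e * j x * e⁻¹ = j (φ x)) (d : F) (k : ℕ)
    (hk : k ≠ 0) (h : (j d * e) ^ k = e ^ k) : d = 1 := by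
  have key : ∀ k, (j d * e) ^ k = j (tnorm φ d k) * e ^ k := by
    intro k
    induction k with
    | zero => simp [tnorm]
    | succ k ih =>
      rw [pow_succ', ih, tnorm, map_mul, ← he, pow_succ']
      group
  apply eq_one_of_tnorm r hr φ hφ d k hk
  apply hj
  rw [key k] at h
  rw [map_one]
  exact mul_eq_right.mp h

end HurwitzAux
namespace HurwitzAux

/-! ### Generalities on semidirect products and coset actions -/

section Generic

variable {n : ℕ} {H : Type} [Group H]

lemma ab_perm (S : Set H) (hS : Subgroup.closure S = ⊤) (art : H →* MulAut (FreeGroup (Fin n)))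
    (perm : H →* Equiv.Perm (Fin n))
    (hg : ∀ s ∈ S, ∀ i, Abelianization.of (art s (FreeGroup.of i)) =
      Abelianization.of (FreeGroup.of (perm s i))) (p : H) :
    ∀ y, Abelianization.of (art p y) = Abelianization.of (FreeGroup.map (perm p) y) := by
  have hp : p ∈ Subgroup.closure S := by rw [hS]; trivial
  induction hp using Subgroup.closure_induction with
  | mem s hs =>
    intro y
    have : (Abelianization.of.comp (art s).toMonoidHom) =
        Abelianization.of.comp (FreeGroup.map (perm s)) := by
      ext i
      simpa using hg s hs i
    exact DFunLike.congr_fun this y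
  | one => intro y; simp
  | mul p q _ _ hp hq =>
    intro y
    have h := congrArg (Abelianization.map (FreeGroup.map (perm p))) (hq y)
    rw [Abelianization.map_of, Abelianization.map_of, FreeGroup.map.comp] at h
    rw [map_mul, MulAut.mul_apply, hp, h, map_mul]
    rfl
  | inv p _ hp =>
    intro y
    have h := congrArg (Abelianization.map (FreeGroup.map (perm p⁻¹))) (hp ((art p)⁻¹ y))
    rw [Abelianization.map_of, Abelianization.map_of, FreeGroup.map.comp] at h
    have e : (⇑(perm p⁻¹) ∘ ⇑(perm p)) = id := by
      ext x; simp
    rw [e, FreeGroup.map.id, MulAut.apply_inv_self] at h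
    rw [map_inv, ← h]

/-- Unique roots in a semidirect product. -/
lemma semi_root (r : FreeGroup (Fin n) →* FreeGroup (Fin 3)) (hr : Function.Injective r)
    (S : Set H) (hS : Subgroup.closure S = ⊤) (art : H →* MulAut (FreeGroup (Fin n)))
    (perm : H →* Equiv.Perm (Fin n))
    (hg : ∀ s ∈ S, ∀ i, Abelianization.of (art s (FreeGroup.of i)) =
      Abelianization.of (FreeGroup.of (perm s i)))
    (m : ℕ) (hm : m ≠ 0)
    (hH : ∀ p p' : H, perm p = 1 → perm p' = 1 → p ^ m = p' ^ m → p = p')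
    (e e' : FreeGroup (Fin n) ⋊[art] H) (h1 : perm e.right = 1) (h2 : perm e'.right = 1)
    (h : e ^ m = e' ^ m) : e = e' := by
  have hright : e.right = e'.right := by
    apply hH _ _ h1 h2
    have := congrArg SemidirectProduct.rightHom h
    rwa [map_pow, map_pow] at this
  have key : e'.left * e.left⁻¹ = 1 := by
    refine root_unique r hr SemidirectProduct.inl SemidirectProduct.inl_injective e
      ((MulAut.conj e.left).toMonoidHom.comp (art e.right).toMonoidHom) ?_ ?_ _ m hm ?_
    · intro x
      rw [← Abelianization.ker_of, MonoidHom.mem_ker]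
      have := ab_perm S hS art perm hg e.right x
      rw [h1] at this
      have e2 : FreeGroup.map (⇑(1 : Equiv.Perm (Fin n))) x = x := FreeGroup.map.id x
      rw [e2] at this
      simp [this]
    · intro x
      ext <;> simp [mul_assoc]
    · rw [h]
      congr 1
      ext
      · simp
      · simp [hright]
  ext1
  · exact (mul_inv_eq_one.mp key).symm
  · exact hright

/-- The monomial permutation of `K × E`. -/
def genPerm {K E : Type} [Group E] (τ : Equiv.Perm K) (c : K → E) : Equiv.Perm (K × E) where
  toFun x := (τ x.1, c x.1 * x.2)
  invFun x := (τ⁻¹ x.1, (c (τ⁻¹ x.1))⁻¹ * x.2)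
  left_inv x := by simp
  right_inv x := by simp

lemma genPerm_mul {K E : Type} [Group E] (τ τ' : Equiv.Perm K) (c c' : K → E) :
    genPerm τ c * genPerm τ' c' = genPerm (τ * τ') (fun k => c (τ' k) * c' k) := by
  ext x <;> simp [genPerm, mul_assoc]

lemma genPerm_inv {K E : Type} [Group E] (τ : Equiv.Perm K) (c : K → E) :
    (genPerm τ c)⁻¹ = genPerm τ⁻¹ (fun k => (c (τ⁻¹ k))⁻¹) := by
  rw [inv_eq_iff_mul_eq_one, genPerm_mul]
  ext x <;> simp [genPerm]

lemma genPerm_one {K E : Type} [Group E] : genPerm (1 : Equiv.Perm K) (fun _ => (1 : E)) = 1 := by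
  ext x <;> simp [genPerm]

lemma coset_lemma {K E G : Type} [Group E] [Group G] (S : Set G) (hS : Subgroup.closure S = ⊤)
    (act : G →* Equiv.Perm (K × E)) (perm : G →* Equiv.Perm K) (ι : E →* G) (r : K → G) (k0 : K)
    (hr : r k0 = 1)
    (hg : ∀ s ∈ S, ∃ c : K → E, act s = genPerm (perm s) c ∧
      ∀ k, r (perm s k) * ι (c k) = s * r k) (b : G) (hb : perm b k0 = k0) :
    ∃ e, b = ι e ∧ ∀ m, act (b ^ m) (k0, 1) = (k0, e ^ m) := by
  have hp : b ∈ Subgroup.closure S := by rw [hS]; trivial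
  have main : ∃ c : K → E, act b = genPerm (perm b) c ∧ ∀ k, r (perm b k) * ι (c k) = b * r k := by
    clear hb
    induction hp using Subgroup.closure_induction with
    | mem s hs => exact hg s hs
    | one => exact ⟨fun _ => 1, by simp [genPerm_one], by simp⟩
    | mul p q _ _ hp hq =>
      obtain ⟨c, h1, h2⟩ := hp
      obtain ⟨c', h1', h2'⟩ := hq
      refine ⟨fun k => c (perm q k) * c' k, by rw [map_mul, h1, h1', genPerm_mul, map_mul], ?_⟩
      intro k
      rw [map_mul, map_mul, Equiv.Perm.mul_apply, ← mul_assoc, h2, mul_assoc, h2', mul_assoc]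
    | inv p _ hp =>
      obtain ⟨c, h1, h2⟩ := hp
      refine ⟨fun k => (c ((perm p)⁻¹ k))⁻¹, by rw [map_inv, h1, genPerm_inv, map_inv], ?_⟩
      intro k
      have := h2 ((perm p)⁻¹ k)
      rw [← Equiv.Perm.mul_apply, mul_inv_cancel, Equiv.Perm.one_apply] at this
      rw [map_inv, map_inv, mul_inv_eq_iff_eq_mul, mul_assoc, this, inv_mul_cancel_left]
  obtain ⟨c, h1, h2⟩ := main
  refine ⟨c k0, ?_, ?_⟩
  · have := h2 k0
    rw [hb, hr] at this
    simpa using this.symm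
  · intro m
    induction m with
    | zero => simp
    | succ m ih =>
      rw [pow_succ', map_mul, Equiv.Perm.mul_apply, ih, h1]
      simp [genPerm, hb, pow_succ']

lemma perm_compat {G : Type} [Group G] (S : Set H) (hS : Subgroup.closure S = ⊤)
    (perm : H →* Equiv.Perm (Fin n)) (permG : G →* Equiv.Perm (Fin (n + 1))) (ι : H →* G)
    (hg : ∀ s ∈ S, ∀ i : Fin n, permG (ι s) i.castSucc = (perm s i).castSucc) (p : H)
    (hp1 : permG (ι p) = 1) : perm p = 1 := by
  have hp : p ∈ Subgroup.closure S := by rw [hS]; trivial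
  have main : ∀ i : Fin n, permG (ι p) i.castSucc = (perm p i).castSucc := by
    clear hp1
    induction hp using Subgroup.closure_induction with
    | mem s hs => exact hg s hs
    | one => simp
    | mul p q _ _ hp hq => intro i; simp [hp, hq]
    | inv p _ hp =>
      intro i
      rw [map_inv, map_inv, map_inv, Equiv.Perm.inv_eq_iff_eq, hp, ← Equiv.Perm.mul_apply, mul_inv_cancel,
        Equiv.Perm.one_apply]
  ext i
  have := main i
  rw [hp1] at this
  simp at this
  simp [← this]

end Generic

/-- The elementary Artin automorphism. -/
def artHom {α : Type} [DecidableEq α] (a b : α) : FreeGroup α →* FreeGroup α :=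
  FreeGroup.lift fun i => if i = b then FreeGroup.of a else
    if i = a then (FreeGroup.of a)⁻¹ * FreeGroup.of b * FreeGroup.of a else FreeGroup.of i

/-- The inverse of the elementary Artin automorphism. -/
def artInv {α : Type} [DecidableEq α] (a b : α) : FreeGroup α →* FreeGroup α :=
  FreeGroup.lift fun i => if i = a then FreeGroup.of b else
    if i = b then FreeGroup.of b * FreeGroup.of a * (FreeGroup.of b)⁻¹ else FreeGroup.of i

/-- The elementary Artin automorphism as an automorphism. -/
def artAut {α : Type} [DecidableEq α] (a b : α) (hab : a ≠ b) : MulAut (FreeGroup α) :=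
  MonoidHom.toMulEquiv (artHom a b) (artInv a b)
    (by
      ext i
      by_cases h1 : i = b
      · subst h1; simp [artHom, artInv]
      · by_cases h2 : i = a
        · subst h2; simp [artHom, artInv, h1, Ne.symm h1, mul_assoc]
        · simp [artHom, artInv, h1, h2])
    (by
      ext i
      by_cases h1 : i = a
      · subst h1; simp [artHom, artInv]
      · by_cases h2 : i = b
        · subst h2; simp [artHom, artInv, h1, Ne.symm h1, mul_assoc]
        · simp [artHom, artInv, h1, h2])

lemma artAut_of {α : Type} [DecidableEq α] (a b : α) (hab : a ≠ b) (i : α) :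
    artAut a b hab (FreeGroup.of i) = if i = b then FreeGroup.of a else
    if i = a then (FreeGroup.of a)⁻¹ * FreeGroup.of b * FreeGroup.of a else FreeGroup.of i := by
  simp [artAut, artHom]

/-! ### Braid groups on three and four strands -/

/-- Homomorphisms from the three strand braid group. -/
def hom3 {G : Type} [Group G] (a b : G) (h : a * b * a = b * a * b) : BraidGroup 3 →* G :=
  PresentedGroup.toGroup (f := (![a, b] : Fin 2 → G)) (by
    rintro r (⟨i, j, hij, rfl⟩ | ⟨i, j, hij, rfl⟩)
    · exfalso
      have := i.isLt; have := j.isLt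
      omega
    · change Fin 2 at i j
      rw [map_mul, map_inv, mul_inv_eq_one]
      fin_cases i <;> fin_cases j <;> simp at hij <;> simp [h])

/-- Homomorphisms from the four strand braid group. -/
def hom4 {G : Type} [Group G] (a b c : G) (h : a * b * a = b * a * b) (h' : b * c * b = c * b * c)
    (h'' : a * c = c * a) : BraidGroup 4 →* G :=
  PresentedGroup.toGroup (f := (![a, b, c] : Fin 3 → G)) (by
    rintro r (⟨i, j, hij, rfl⟩ | ⟨i, j, hij, rfl⟩)
    · change Fin 3 at i j
      rw [map_mul, map_inv, mul_inv_eq_one]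
      fin_cases i <;> fin_cases j <;> simp at hij <;> simp [h'']
    · change Fin 3 at i j
      rw [map_mul, map_inv, mul_inv_eq_one]
      fin_cases i <;> fin_cases j <;> simp at hij <;> simp [h, h'])

/-- Generators of the three strand group. -/
def s3 (i : Fin 2) : BraidGroup 3 := PresentedGroup.of i

/-- Generators of the four strand group. -/
def s4 (i : Fin 3) : BraidGroup 4 := PresentedGroup.of i

lemma s3_closure : Subgroup.closure (Set.range s3) = ⊤ := PresentedGroup.closure_range_of _

lemma s4_closure : Subgroup.closure (Set.range s4) = ⊤ := PresentedGroup.closure_range_of _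

lemma hom3_s {G : Type} [Group G] (a b : G) (h : a * b * a = b * a * b) (i : Fin 2) :
    hom3 a b h (s3 i) = (![a, b] : Fin 2 → G) i := PresentedGroup.toGroup.of _

lemma hom4_s {G : Type} [Group G] (a b c : G) (h : a * b * a = b * a * b)
    (h' : b * c * b = c * b * c) (h'' : a * c = c * a) (i : Fin 3) :
    hom4 a b c h h' h'' (s4 i) = (![a, b, c] : Fin 3 → G) i := PresentedGroup.toGroup.of _

lemma mk_rel {α : Type} {rels : Set (FreeGroup α)} (x y : FreeGroup α) (h : x * y⁻¹ ∈ rels) :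
    PresentedGroup.mk rels x = PresentedGroup.mk rels y := by
  rw [← mul_inv_eq_one, ← map_inv, ← map_mul]
  exact PresentedGroup.one_of_mem h

lemma s3_rel : s3 0 * s3 1 * s3 0 = s3 1 * s3 0 * s3 1 := by
  have := mk_rel (rels := braidRels 3) (FreeGroup.of (0 : Fin 2) * FreeGroup.of (1 : Fin 2) * FreeGroup.of (0 : Fin 2)) (FreeGroup.of (1 : Fin 2) * FreeGroup.of (0 : Fin 2) * FreeGroup.of (1 : Fin 2))
    (Or.inr ⟨(0 : Fin 2), (1 : Fin 2), by simp, rfl⟩)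
  exact this

lemma s4_rel01 : s4 0 * s4 1 * s4 0 = s4 1 * s4 0 * s4 1 := by
  have := mk_rel (rels := braidRels 4) (FreeGroup.of (0 : Fin 3) * FreeGroup.of (1 : Fin 3) * FreeGroup.of (0 : Fin 3)) (FreeGroup.of (1 : Fin 3) * FreeGroup.of (0 : Fin 3) * FreeGroup.of (1 : Fin 3))
    (Or.inr ⟨(0 : Fin 3), (1 : Fin 3), by simp, rfl⟩)
  exact this

lemma s4_rel12 : s4 1 * s4 2 * s4 1 = s4 2 * s4 1 * s4 2 := by
  have := mk_rel (rels := braidRels 4) (FreeGroup.of (1 : Fin 3) * FreeGroup.of (2 : Fin 3) * FreeGroup.of (1 : Fin 3)) (FreeGroup.of (2 : Fin 3) * FreeGroup.of (1 : Fin 3) * FreeGroup.of (2 : Fin 3))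
    (Or.inr ⟨(1 : Fin 3), (2 : Fin 3), by simp, rfl⟩)
  exact this

lemma s4_rel02 : s4 0 * s4 2 = s4 2 * s4 0 := by
  have := mk_rel (rels := braidRels 4) (FreeGroup.of (0 : Fin 3) * FreeGroup.of (2 : Fin 3)) (FreeGroup.of (2 : Fin 3) * FreeGroup.of (0 : Fin 3))
    (Or.inl ⟨(0 : Fin 3), (2 : Fin 3), by simp, rfl⟩)
  exact this

/-- Permutation of a three strand braid. -/
def perm3 : BraidGroup 3 →* Equiv.Perm (Fin 3) :=
  hom3 (Equiv.swap 0 1) (Equiv.swap 1 2) (by decide)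

/-- Permutation of a four strand braid. -/
def perm4 : BraidGroup 4 →* Equiv.Perm (Fin 4) :=
  hom4 (Equiv.swap 0 1) (Equiv.swap 1 2) (Equiv.swap 2 3) (by decide) (by decide) (by decide)

end HurwitzAux
namespace HurwitzAux

lemma br1 {G : Type} [Group G] {a b : G} (h : a * b * a = b * a * b) :
    a * (b * b) * a⁻¹ = b⁻¹ * (a * a) * b := by
  have : b * (a * (b * b)) = a * a * b * a := by
    calc b * (a * (b * b)) = (b * a * b) * b := by group
      _ = a * b * a * b := by rw [← h]
      _ = a * (b * a * b) := by group
      _ = a * a * b * a := by rw [← h]; group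
  rw [mul_inv_eq_iff_eq_mul, mul_assoc, mul_assoc, eq_inv_mul_iff_mul_eq, this]
  group

lemma br2 {G : Type} [Group G] {a b : G} (h : a * b * a = b * a * b) :
    a * (b⁻¹ * (a * a) * b) * a⁻¹ =
      (b⁻¹ * (a * a) * b)⁻¹ * (b * b) * (b⁻¹ * (a * a) * b) := by
  have e : a * (b * a * a * b) = (b * a * a * b) * a := by
    calc a * (b * a * a * b) = (a * b * a) * (a * b) := by group
      _ = b * a * (b * a * b) := by rw [h]; group
      _ = (b * a * a * b) * a := by rw [← h]; group
  rw [mul_assoc _ (b * b), eq_inv_mul_iff_mul_eq]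
  have e2 : b⁻¹ * (a * a) * b * (a * (b⁻¹ * (a * a) * b) * a⁻¹)
      = (a * (b * a * a * b)) * a⁻¹ := by
    rw [← br1 h]
    nth_rw 2 [br1 h]
    group
  rw [e2, e]
  group

lemma br3 {G : Type} [Group G] {a b c : G} (h' : b * c * b = c * b * c) (h'' : a * c = c * a) :
    b * (c⁻¹ * (b⁻¹ * (a * a) * b) * c) * b⁻¹ = c⁻¹ * (b⁻¹ * (a * a) * b) * c := by
  have e1 : b * c⁻¹ * b⁻¹ = c⁻¹ * b⁻¹ * c := by
    rw [mul_inv_eq_iff_eq_mul, mul_assoc, mul_assoc, eq_inv_mul_iff_mul_eq,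
      eq_inv_mul_iff_mul_eq, ← mul_assoc, ← mul_assoc, h']
    group
  have e2 : c * (a * a) = (a * a) * c := by
    rw [← mul_assoc, ← h'', mul_assoc, ← h'', mul_assoc]
  have e3 : b * c * b⁻¹ = c⁻¹ * b * c := by
    rw [mul_inv_eq_iff_eq_mul, mul_assoc, mul_assoc, eq_inv_mul_iff_mul_eq, ← mul_assoc, ← mul_assoc, h']
  calc b * (c⁻¹ * (b⁻¹ * (a * a) * b) * c) * b⁻¹
      = (b * c⁻¹ * b⁻¹) * (a * a) * (b * c * b⁻¹) := by group
    _ = c⁻¹ * b⁻¹ * (c * (a * a)) * (c⁻¹ * b * c) := by rw [e1, e3]; group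
    _ = _ := by rw [e2]; group

lemma conj_conj {G : Type} [Group G] {a c x : G} (h : a * c = c * a) :
    a * (c⁻¹ * x * c) * a⁻¹ = c⁻¹ * (a * x * a⁻¹) * c := by
  have h1 : a * c⁻¹ = c⁻¹ * a := by
    rw [mul_inv_eq_iff_eq_mul, mul_assoc, h, inv_mul_cancel_left]
  have h2 : c * a⁻¹ = a⁻¹ * c := by
    rw [mul_inv_eq_iff_eq_mul, mul_assoc, ← h, inv_mul_cancel_left]
  calc _ = (a * c⁻¹) * x * (c * a⁻¹) := by group
    _ = _ := by rw [h1, h2]; group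

lemma lift_lemma {n : ℕ} {H G : Type} [Group H] [Group G] (S : Set H)
    (hS : Subgroup.closure S = ⊤) (art : H →* MulAut (FreeGroup (Fin n)))
    (f : FreeGroup (Fin n) →* G) (g : H →* G)
    (hg : ∀ s ∈ S, ∀ i, f (art s (FreeGroup.of i)) = g s * f (FreeGroup.of i) * (g s)⁻¹) (p : H) :
    f.comp (art p).toMonoidHom = (MulAut.conj (g p)).toMonoidHom.comp f := by
  have hp : p ∈ Subgroup.closure S := by rw [hS]; trivial
  have main : ∀ x, f (art p x) = g p * f x * (g p)⁻¹ := by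
    induction hp using Subgroup.closure_induction with
    | mem s hs =>
      intro x
      have : f.comp (art s).toMonoidHom = (MulAut.conj (g s)).toMonoidHom.comp f := by
        ext i
        simpa using hg s hs i
      simpa using DFunLike.congr_fun this x
    | one => intro x; simp
    | mul p q _ _ hp hq => intro x; simp [hp, hq, mul_assoc]
    | inv p _ hp =>
      intro x
      have := hp ((art p)⁻¹ x)
      rw [MulAut.apply_inv_self] at this
      rw [this]
      simp [mul_assoc]
  ext x
  simpa using main (FreeGroup.of x)

/-! ### The three strand group -/

/-- action of the two strand group -/
def art2 : Multiplicative ℤ →* MulAut (FreeGroup (Fin 2)) :=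
  zpowersHom _ (artAut 0 1 (by decide))

/-- permutation of a two strand braid -/
def perm2 : Multiplicative ℤ →* Equiv.Perm (Fin 2) := zpowersHom _ (Equiv.swap 0 1)

/-- generator -/
def t2 : Multiplicative ℤ := Multiplicative.ofAdd 1

lemma art2_t : art2 t2 = artAut 0 1 (by decide) := by simp [art2, t2]

lemma perm2_t : perm2 t2 = Equiv.swap 0 1 := by simp [perm2, t2]

lemma t2_closure : Subgroup.closure {t2} = ⊤ := by
  rw [eq_top_iff]
  intro x _
  rw [Subgroup.mem_closure_singleton]
  exact ⟨Multiplicative.toAdd x, by rw [t2, ← ofAdd_zsmul]; simp⟩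

/-- The semidirect product. -/
abbrev E3 := FreeGroup (Fin 2) ⋊[art2] Multiplicative ℤ

/-- free generators -/
def x3 (i : Fin 2) : E3 := SemidirectProduct.inl (FreeGroup.of i)

/-- base generator -/
def y3 : E3 := SemidirectProduct.inr t2

/-- cocycle -/
def c30 : Fin 3 → E3 := ![x3 0, 1, y3]
/-- cocycle -/
def c31 : Fin 3 → E3 := ![y3, x3 1, 1]

/-- The coset action -/
def act3 : BraidGroup 3 →* Equiv.Perm (Fin 3 × E3) :=
  hom3 (genPerm (Equiv.swap 0 1) c30) (genPerm (Equiv.swap 1 2) c31) (by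
    simp only [genPerm_mul]
    congr 1
    · decide
    · have d1 : Equiv.swap (0 : Fin 3) 1 2 = 2 := by decide
      have d2 : Equiv.swap (1 : Fin 3) 2 0 = 0 := by decide
      funext k
      fin_cases k <;>
      (simp [c30, c31, d1, d2]
       try (ext <;> simp [x3, y3, art2_t, artAut_of, mul_assoc])))

/-- images of the free generators -/
def f3 : FreeGroup (Fin 2) →* BraidGroup 3 :=
  FreeGroup.lift ![(s3 1)⁻¹ * (s3 0 * s3 0) * s3 1, s3 1 * s3 1]

/-- the stabiliser inclusion -/
def i3 : E3 →* BraidGroup 3 :=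
  SemidirectProduct.lift f3 (zpowersHom _ (s3 0)) (lift_lemma {t2} t2_closure art2 f3 _ (by
    intro s hs i
    rw [Set.mem_singleton_iff] at hs
    subst hs
    rw [art2_t, artAut_of]
    fin_cases i
    · simp [f3, t2]
      have := br2 s3_rel
      simp [mul_assoc] at this ⊢
      exact this.symm
    · simp [f3, t2]
      have := br1 s3_rel
      simp [mul_assoc] at this ⊢
      exact this.symm))

lemma i3_x (i : Fin 2) : i3 (x3 i) = ![(s3 1)⁻¹ * (s3 0 * s3 0) * s3 1, s3 1 * s3 1] i := by
  simp [i3, x3, f3]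

lemma i3_y : i3 y3 = s3 0 := by
  simp [i3, y3, t2]

lemma coset3 (b : BraidGroup 3) (hb : perm3 b = 1) :
    ∃ e, b = i3 e ∧ ∀ m, act3 (b ^ m) (2, 1) = (2, e ^ m) := by
  refine coset_lemma (Set.range s3) s3_closure act3 perm3 i3 ![s3 0 * s3 1, s3 1, 1] 2 rfl ?_ b
    (by rw [hb]; rfl)
  rintro _ ⟨i, rfl⟩
  have d1 : Equiv.swap (0 : Fin 3) 1 2 = 2 := by decide
  have d2 : Equiv.swap (1 : Fin 3) 2 0 = 0 := by decide
  have h := s3_rel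
  rw [mul_assoc, mul_assoc] at h
  fin_cases i
  · refine ⟨c30, by simp [act3, perm3, hom3_s], ?_⟩
    intro k
    fin_cases k <;> simp [perm3, hom3_s, c30, i3_x, i3_y, d1, mul_assoc]
  · refine ⟨c31, by simp [act3, perm3, hom3_s], ?_⟩
    intro k
    fin_cases k <;> simp [perm3, hom3_s, c31, i3_x, i3_y, d2, mul_assoc, h]

lemma perm_f3 (x : FreeGroup (Fin 2)) : perm3 (f3 x) = 1 := by
  have : perm3.comp f3 = 1 := by
    ext1 i
    fin_cases i
    · simp [f3, perm3, hom3_s]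
    · simp [f3, perm3, hom3_s]
  exact DFunLike.congr_fun this x

lemma right3 (e : E3) (h : perm3 (i3 e) = 1) : perm2 e.right = 1 := by
  refine perm_compat {t2} t2_closure perm2 perm3 (i3.comp SemidirectProduct.inr) ?_ _ ?_
  · intro s hs i
    rw [Set.mem_singleton_iff] at hs
    subst hs
    have : (i3.comp SemidirectProduct.inr) t2 = s3 0 := i3_y
    rw [this, perm2_t]
    simp only [perm3, hom3_s]
    revert i
    decide
  · have e1 : i3 e = f3 e.left * i3 (SemidirectProduct.inr e.right) := by
      conv_lhs => rw [← SemidirectProduct.inl_left_mul_inr_right e]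
      rw [map_mul]
      congr 1
      exact SemidirectProduct.lift_inl _ _ _ _
    rw [e1, map_mul, perm_f3, one_mul] at h
    exact h

lemma pure3_root (m : ℕ) (hm : m ≠ 0) (p p' : BraidGroup 3) (h1 : perm3 p = 1)
    (h2 : perm3 p' = 1) (h : p ^ m = p' ^ m) : p = p' := by
  obtain ⟨e, he, hm1⟩ := coset3 p h1
  obtain ⟨e', he', hm2⟩ := coset3 p' h2
  have hE : e ^ m = e' ^ m := by
    have := hm1 m
    rw [h, hm2 m] at this
    exact (congrArg Prod.snd this).symm
  rw [he, he']
  congr 1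
  refine semi_root (FreeGroup.map Fin.castSucc) (FreeGroup.map_injective (Fin.castSucc_injective 2))
    {t2} t2_closure art2 perm2 ?_ m hm ?_ e e' (right3 e (by rw [← he, h1]))
    (right3 e' (by rw [← he', h2])) hE
  · intro s hs i
    rw [Set.mem_singleton_iff] at hs
    subst hs
    rw [art2_t, perm2_t, artAut_of]
    fin_cases i
    · simp [mul_comm]
    · simp
  · intro q q' _ _ hq
    exact pow_left_injective hm hq

end HurwitzAux
namespace HurwitzAux

/-! ### The four strand group -/

lemma artAut_braid : artAut (0 : Fin 3) 1 (by decide) * artAut (1 : Fin 3) 2 (by decide) *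
      artAut (0 : Fin 3) 1 (by decide) = artAut (1 : Fin 3) 2 (by decide) *
      artAut (0 : Fin 3) 1 (by decide) * artAut (1 : Fin 3) 2 (by decide) := by
  apply MulEquiv.toMonoidHom_injective
  ext1 i
  fin_cases i <;> simp [artAut_of, mul_assoc]

/-- action of the three strand group -/
def art3 : BraidGroup 3 →* MulAut (FreeGroup (Fin 3)) :=
  hom3 (artAut 0 1 (by decide)) (artAut 1 2 (by decide)) artAut_braid

lemma art3_0 : art3 (s3 0) = artAut 0 1 (by decide) := hom3_s _ _ _ _

lemma art3_1 : art3 (s3 1) = artAut 1 2 (by decide) := hom3_s _ _ _ _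

/-- The semidirect product. -/
abbrev E4 := FreeGroup (Fin 3) ⋊[art3] BraidGroup 3

/-- free generators -/
def x4 (i : Fin 3) : E4 := SemidirectProduct.inl (FreeGroup.of i)

/-- base generators -/
def y4 (i : Fin 2) : E4 := SemidirectProduct.inr (s3 i)

/-- cocycle -/
def c40 : Fin 4 → E4 := ![x4 0, 1, y4 0, y4 0]
/-- cocycle -/
def c41 : Fin 4 → E4 := ![y4 0, x4 1, 1, y4 1]
/-- cocycle -/
def c42 : Fin 4 → E4 := ![y4 1, y4 1, x4 2, 1]

lemma d012 : Equiv.swap (0 : Fin 4) 1 2 = 2 := by decide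
lemma d013 : Equiv.swap (0 : Fin 4) 1 3 = 3 := by decide
lemma d120 : Equiv.swap (1 : Fin 4) 2 0 = 0 := by decide
lemma d123 : Equiv.swap (1 : Fin 4) 2 3 = 3 := by decide
lemma d230 : Equiv.swap (2 : Fin 4) 3 0 = 0 := by decide
lemma d231 : Equiv.swap (2 : Fin 4) 3 1 = 1 := by decide

lemma s3_rel_assoc : s3 0 * (s3 1 * s3 0) = s3 1 * (s3 0 * s3 1) := by
  rw [← mul_assoc, ← mul_assoc, s3_rel]

/-- The coset action -/
def act4 : BraidGroup 4 →* Equiv.Perm (Fin 4 × E4) :=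
  hom4 (genPerm (Equiv.swap 0 1) c40) (genPerm (Equiv.swap 1 2) c41)
    (genPerm (Equiv.swap 2 3) c42)
    (by
      simp only [genPerm_mul]
      congr 1
      · decide
      · funext k
        fin_cases k <;>
        (simp [c40, c41, d012, d013, d120, d123]
         try (ext <;> simp [x4, y4, art3_0, art3_1, artAut_of, mul_assoc, s3_rel_assoc])))
    (by
      simp only [genPerm_mul]
      congr 1
      · decide
      · funext k
        fin_cases k <;>
        (simp [c42, c41, d230, d231, d120, d123]
         try (ext <;> simp [x4, y4, art3_0, art3_1, artAut_of, mul_assoc, s3_rel_assoc])))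
    (by
      simp only [genPerm_mul]
      congr 1
      · decide
      · funext k
        fin_cases k <;>
        (simp [c42, c40, d230, d231, d012, d013]
         try (ext <;> simp [x4, y4, art3_0, art3_1, artAut_of, mul_assoc, s3_rel_assoc])))

/-- images of the free generators -/
def v4 : Fin 3 → BraidGroup 4 :=
  ![(s4 2)⁻¹ * ((s4 1)⁻¹ * (s4 0 * s4 0) * s4 1) * s4 2, (s4 2)⁻¹ * (s4 1 * s4 1) * s4 2,
    s4 2 * s4 2]

/-- images of the free generators -/
def f4 : FreeGroup (Fin 3) →* BraidGroup 4 := FreeGroup.lift v4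

/-- inclusion of the three strand group -/
def g4 : BraidGroup 3 →* BraidGroup 4 := hom3 (s4 0) (s4 1) s4_rel01

lemma g4_0 : g4 (s3 0) = s4 0 := hom3_s _ _ _ _

lemma g4_1 : g4 (s3 1) = s4 1 := hom3_s _ _ _ _

/-- the stabiliser inclusion -/
def i4 : E4 →* BraidGroup 4 :=
  SemidirectProduct.lift f4 g4 (lift_lemma (Set.range s3) s3_closure art3 f4 g4 (by
    rintro _ ⟨j, rfl⟩ i
    fin_cases j
    · change f4 (art3 (s3 0) _) = g4 (s3 0) * _ * (g4 (s3 0))⁻¹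
      rw [art3_0, artAut_of, g4_0]
      fin_cases i
      · have := conj_conj (x := (s4 1)⁻¹ * (s4 0 * s4 0) * s4 1) s4_rel02
        rw [br2 s4_rel01] at this
        simp [f4, v4]
        simp [mul_assoc] at this ⊢
        exact this.symm
      · have := conj_conj (x := s4 1 * s4 1) s4_rel02
        rw [br1 s4_rel01] at this
        simp [f4, v4]
        simp [mul_assoc] at this ⊢
        exact this.symm
      · simp [f4, v4]
        rw [eq_mul_inv_iff_mul_eq, ← mul_assoc, s4_rel02, mul_assoc, mul_assoc, s4_rel02]
    · change f4 (art3 (s3 1) _) = g4 (s3 1) * _ * (g4 (s3 1))⁻¹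
      rw [art3_1, artAut_of, g4_1]
      fin_cases i
      · have := br3 s4_rel12 s4_rel02
        simp [f4, v4]
        exact this.symm
      · have := br2 s4_rel12
        simp [f4, v4]
        simp [mul_assoc] at this ⊢
        exact this.symm
      · have := br1 s4_rel12
        simp [f4, v4]
        exact this.symm))

lemma i4_x (i : Fin 3) : i4 (x4 i) = v4 i := by
  rw [i4, x4, SemidirectProduct.lift_inl, f4, FreeGroup.lift_apply_of]

lemma i4_y0 : i4 (y4 0) = s4 0 := by
  rw [i4, y4, SemidirectProduct.lift_inr, g4_0]

lemma i4_y1 : i4 (y4 1) = s4 1 := by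
  rw [i4, y4, SemidirectProduct.lift_inr, g4_1]

lemma coset4 (b : BraidGroup 4) (hb : perm4 b = 1) :
    ∃ e, b = i4 e ∧ ∀ m, act4 (b ^ m) (3, 1) = (3, e ^ m) := by
  refine coset_lemma (Set.range s4) s4_closure act4 perm4 i4
    ![s4 0 * s4 1 * s4 2, s4 1 * s4 2, s4 2, 1] 3 rfl ?_ b (by rw [hb]; rfl)
  rintro _ ⟨i, rfl⟩
  have h01 := s4_rel01
  have h12 := s4_rel12
  have h02 := s4_rel02
  rw [mul_assoc, mul_assoc] at h01 h12
  have h01' : ∀ z, s4 0 * (s4 1 * (s4 0 * z)) = s4 1 * (s4 0 * (s4 1 * z)) := by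
    intro z
    have := congrArg (· * z) h01
    simpa only [mul_assoc] using this
  have h02' : ∀ z, s4 0 * (s4 2 * z) = s4 2 * (s4 0 * z) := by
    intro z
    have := congrArg (· * z) h02
    simpa only [mul_assoc] using this
  fin_cases i
  · refine ⟨c40, by simp [act4, perm4, hom4_s], ?_⟩
    intro k
    fin_cases k <;> simp [perm4, hom4_s, c40, i4_x, v4, i4_y0, i4_y1, d012, d013, mul_assoc, h02]
  · refine ⟨c41, by simp [act4, perm4, hom4_s], ?_⟩
    intro k
    fin_cases k <;> simp [perm4, hom4_s, c41, i4_x, v4, i4_y0, i4_y1, d120, d123, mul_assoc, ← h02,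
      h01', h12]
  · refine ⟨c42, by simp [act4, perm4, hom4_s], ?_⟩
    intro k
    fin_cases k <;> simp [perm4, hom4_s, c42, i4_x, v4, i4_y0, i4_y1, d230, d231, mul_assoc, h12,
      h02']

lemma perm_f4 (x : FreeGroup (Fin 3)) : perm4 (f4 x) = 1 := by
  have : perm4.comp f4 = 1 := by
    ext1 i
    fin_cases i
    · simp [f4, v4, perm4, hom4_s]
    · simp [f4, v4, perm4, hom4_s]
    · simp [f4, v4, perm4, hom4_s]
  exact DFunLike.congr_fun this x

lemma right4 (e : E4) (h : perm4 (i4 e) = 1) : perm3 e.right = 1 := by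
  refine perm_compat (Set.range s3) s3_closure perm3 perm4 g4 ?_ _ ?_
  · rintro _ ⟨j, rfl⟩ i
    fin_cases j
    · change perm4 (g4 (s3 0)) _ = (perm3 (s3 0) i).castSucc
      rw [g4_0]
      simp only [perm3, perm4, hom3_s, hom4_s]
      revert i
      decide
    · change perm4 (g4 (s3 1)) _ = (perm3 (s3 1) i).castSucc
      rw [g4_1]
      simp only [perm3, perm4, hom3_s, hom4_s]
      revert i
      decide
  · have e1 : i4 e = f4 e.left * g4 e.right := by
      conv_lhs => rw [← SemidirectProduct.inl_left_mul_inr_right e]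
      rw [map_mul, i4, SemidirectProduct.lift_inl, SemidirectProduct.lift_inr]
    rw [e1, map_mul, perm_f4, one_mul] at h
    exact h

lemma pure4_root (m : ℕ) (hm : m ≠ 0) (p p' : BraidGroup 4) (h1 : perm4 p = 1)
    (h2 : perm4 p' = 1) (h : p ^ m = p' ^ m) : p = p' := by
  obtain ⟨e, he, hm1⟩ := coset4 p h1
  obtain ⟨e', he', hm2⟩ := coset4 p' h2
  have hE : e ^ m = e' ^ m := by
    have := hm1 m
    rw [h, hm2 m] at this
    exact (congrArg Prod.snd this).symm
  rw [he, he']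
  congr 1
  refine semi_root (MonoidHom.id _) Function.injective_id
    (Set.range s3) s3_closure art3 perm3 ?_ m hm (pure3_root m hm) e e'
    (right4 e (by rw [← he, h1])) (right4 e' (by rw [← he', h2])) hE
  rintro _ ⟨j, rfl⟩ i
  fin_cases j
  · change Abelianization.of (art3 (s3 0) _) = Abelianization.of (FreeGroup.of (perm3 (s3 0) i))
    rw [art3_0, artAut_of, perm3, hom3_s]
    fin_cases i
    · simp [mul_comm]
    · simp
    · rfl
  · change Abelianization.of (art3 (s3 1) _) = Abelianization.of (FreeGroup.of (perm3 (s3 1) i))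
    rw [art3_1, artAut_of, perm3, hom3_s]
    fin_cases i
    · rfl
    · simp [mul_comm]
    · simp

/-! ### The Hurwitz orbit -/

set_option maxRecDepth 20000 in
lemma perm_order : ∀ g : Equiv.Perm (Fin 4), ∃ j : ℕ, j ≠ 0 ∧ j ≤ 4 ∧ g ^ j = 1 := by
  have : ∀ g : Equiv.Perm (Fin 4), g ^ 1 = 1 ∨ g ^ 2 = 1 ∨ g ^ 3 = 1 ∨ g ^ 4 = 1 := by decide
  intro g
  rcases this g with h | h | h | h
  exacts [⟨1, by omega, by omega, h⟩, ⟨2, by omega, by omega, h⟩, ⟨3, by omega, by omega, h⟩,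
    ⟨4, by omega, by omega, h⟩]

lemma orbit_eq {G : Type} [Group G] (s : Fin 2 → G) :
    hurwitzOrbit s = {t | ∃ k : ℤ, ((hEquiv (G := G) (n := 2) (0 : Fin 1)) ^ k) s = t} := by
  have key : ∀ w : FreeGroup (Fin 1), ∃ k : ℤ,
      MulOpposite.unop (FreeGroup.lift
        (fun i : Fin 1 => MulOpposite.op (hEquiv (G := G) (n := 2) i)) w)
        = (hEquiv (G := G) (n := 2) (0 : Fin 1)) ^ k := by
    intro w
    induction w using FreeGroup.induction_on with
    | C1 => exact ⟨0, by simp⟩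
    | of i => exact ⟨1, by fin_cases i; simp⟩
    | inv_of i _ => exact ⟨-1, by fin_cases i; simp⟩
    | mul x y hx hy =>
      obtain ⟨k, hk⟩ := hx
      obtain ⟨l, hl⟩ := hy
      exact ⟨l + k, by rw [map_mul, MulOpposite.unop_mul, hk, hl, zpow_add]⟩
  ext t
  constructor
  · rintro ⟨w, rfl⟩
    obtain ⟨k, hk⟩ := key w
    exact ⟨k, by rw [← hk]; rfl⟩
  · rintro ⟨k, rfl⟩
    refine ⟨(FreeGroup.of (0 : Fin 1)) ^ k, ?_⟩
    have : FreeGroup.lift (fun i : Fin 1 => MulOpposite.op (hEquiv (G := G) (n := 2) i))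
        ((FreeGroup.of (0 : Fin 1)) ^ k) =
        MulOpposite.op ((hEquiv (G := G) (n := 2) (0 : Fin 1)) ^ k) := by simp
    change MulOpposite.unop (FreeGroup.lift
        (fun i : Fin 1 => MulOpposite.op (hEquiv (G := G) (n := 2) i)) _) s = _
    rw [this, MulOpposite.unop_op]

lemma h_sq {G : Type} [Group G] (a b : G) :
    ((hEquiv (G := G) (n := 2) (0 : Fin 1)) ^ 2) ![a, b] =
      ![(a * b)⁻¹ * a * (a * b), (a * b)⁻¹ * b * (a * b)] := by
  rw [pow_two, Equiv.Perm.mul_apply]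
  funext i
  fin_cases i <;> simp [hEquiv, mul_assoc]

lemma h_pow {G : Type} [Group G] (a b : G) (k : ℕ) :
    ((hEquiv (G := G) (n := 2) (0 : Fin 1)) ^ (2 * k)) ![a, b] =
      ![((a * b) ^ k)⁻¹ * a * (a * b) ^ k, ((a * b) ^ k)⁻¹ * b * (a * b) ^ k] := by
  induction k with
  | zero => simp
  | succ k ih =>
    rw [mul_add, mul_one, add_comm, pow_add, Equiv.Perm.mul_apply, ih, h_sq]
    have : ((a * b) ^ k)⁻¹ * a * (a * b) ^ k * (((a * b) ^ k)⁻¹ * b * (a * b) ^ k) = a * b := by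
      calc _ = ((a * b) ^ k)⁻¹ * ((a * b) * (a * b) ^ k) := by simp [mul_assoc]
        _ = _ := by rw [← pow_succ', pow_succ, inv_mul_cancel_left]
    rw [this, pow_succ]
    simp [mul_assoc]

lemma main_aux (a b : BraidGroup 4) (h : (hurwitzOrbit ![a, b]).Finite) :
    (hurwitzOrbit ![a, b]).ncard ≤ 8 := by
  set η := hEquiv (G := BraidGroup 4) (n := 2) (0 : Fin 1) with hη
  rw [orbit_eq, ← hη] at h ⊢
  -- some positive power fixes the system
  obtain ⟨k, hk, hfix⟩ : ∃ k : ℕ, k ≠ 0 ∧ (η ^ k) ![a, b] = ![a, b] := by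
    have : ¬ Function.Injective (fun k : ℕ => (η ^ k) ![a, b]) := by
      intro hinj
      refine Set.infinite_range_of_injective hinj (h.subset ?_)
      rintro _ ⟨k, rfl⟩
      exact ⟨k, by simp⟩
    simp only [Function.Injective, not_forall] at this
    obtain ⟨i, j, hij, hne⟩ := this
    wlog hlt : i < j generalizing i j
    · exact this j i hij.symm (Ne.symm hne) (by omega)
    refine ⟨j - i, by omega, ?_⟩
    have e : η ^ j = η ^ i * η ^ (j - i) := by rw [← pow_add]; congr 1; omega
    simp only [e, Equiv.Perm.mul_apply] at hij
    exact ((η ^ i).injective hij).symm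
  have hfix2 : (η ^ (2 * k)) ![a, b] = ![a, b] := by
    rw [two_mul, pow_add, Equiv.Perm.mul_apply, hfix, hfix]
  rw [hη, h_pow] at hfix2
  have hc : ((a * b) ^ k)⁻¹ * a * (a * b) ^ k = a := congrFun hfix2 0
  obtain ⟨j, hj0, hj4, hj⟩ := perm_order (perm4 (a * b))
  have hB : perm4 ((a * b) ^ j) = 1 := by rw [map_pow, hj]
  have hcomm : a * (a * b) ^ j * a⁻¹ = (a * b) ^ j := by
    refine pure4_root k hk _ _ (by rw [map_mul, map_mul, hB, map_inv]; simp) hB ?_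
    rw [conj_pow, ← pow_mul, mul_comm j k, pow_mul, ← conj_pow]
    congr 1
    rw [mul_inv_eq_iff_eq_mul]
    rw [mul_assoc, inv_mul_eq_iff_eq_mul] at hc
    exact hc
  have hca : ((a * b) ^ j)⁻¹ * a * (a * b) ^ j = a := by
    rw [mul_assoc, inv_mul_eq_iff_eq_mul, ← mul_inv_eq_iff_eq_mul]
    exact hcomm
  have hcb : ((a * b) ^ j)⁻¹ * b * (a * b) ^ j = b := by
    have e : b = a⁻¹ * (a * b) := by group
    have e2 : ((a * b) ^ j)⁻¹ * b * (a * b) ^ j =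
        (((a * b) ^ j)⁻¹ * a * (a * b) ^ j)⁻¹ * (a * b) := by
      calc _ = ((a * b) ^ j)⁻¹ * a⁻¹ * ((a * b) * (a * b) ^ j) := by simp [mul_assoc]
        _ = _ := by rw [← pow_succ', pow_succ]; simp [mul_assoc]
    rw [e2, hca, ← e]
  have hper : (η ^ (2 * j)) ![a, b] = ![a, b] := by
    rw [hη, h_pow, hca, hcb]
  have hperz : ∀ q : ℤ, ((η ^ (2 * j)) ^ q) ![a, b] = ![a, b] := fun q =>
    Equiv.Perm.zpow_apply_eq_self_of_apply_eq_self hper q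
  have hsub : {t | ∃ k : ℤ, (η ^ k) ![a, b] = t} ⊆
      Set.range (fun i : Fin (2 * j) => (η ^ (i : ℕ)) ![a, b]) := by
    rintro _ ⟨k, rfl⟩
    have hpos : (0 : ℤ) < ((2 * j : ℕ) : ℤ) := by omega
    have h0 := Int.emod_nonneg k hpos.ne'
    have h1 := Int.emod_lt_of_pos k hpos
    refine ⟨⟨(k % ((2 * j : ℕ) : ℤ)).toNat, by omega⟩, ?_⟩
    have e : η ^ k = η ^ ((k % ((2 * j : ℕ) : ℤ)).toNat) * (η ^ (2 * j)) ^ (k / ((2 * j : ℕ) : ℤ)) := by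
      rw [← zpow_natCast η (2 * j), ← zpow_mul, ← zpow_natCast η, ← zpow_add, Int.toNat_of_nonneg h0,
        Int.emod_add_mul_ediv]
    rw [e, Equiv.Perm.mul_apply, hperz]
  calc _ ≤ (Set.range (fun i : Fin (2 * j) => (η ^ (i : ℕ)) ![a, b])).ncard :=
        Set.ncard_le_ncard hsub (Set.finite_range _)
    _ ≤ Nat.card (Fin (2 * j)) := by
        rw [← Set.image_univ, ← Set.ncard_univ]
        exact Set.ncard_image_le Set.finite_univ
    _ ≤ 8 := by rw [Nat.card_fin]; omega

end HurwitzAux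

theorem hurwitzOrbit_card_le_eight (s : Fin 2 → BraidGroup 4)
    (h : (hurwitzOrbit s).Finite) :
    (hurwitzOrbit s).ncard ≤ 8 := by
  have e : s = ![s 0, s 1] := by
    funext i; fin_cases i <;> rfl
  rw [e] at h ⊢
  exact HurwitzAux.main_aux _ _ h
end

section
/- For every m ≥ 4, the Hurwitz orbit of the length 2 braid system (σ_1, σ_2σ_3⋯σ_{m-1}) ∈ B_m^2 has exactly 2m elements. -/
namespace HurwitzAux

lemma gen_comm {m i j : ℕ} (hi : 1 ≤ i) (hij : i + 2 ≤ j) (hj : j ≤ m - 1) :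
    braidGen m i * braidGen m j = braidGen m j * braidGen m i := by
  unfold braidGen
  rw [dif_pos ⟨hi, by omega⟩, dif_pos ⟨by omega, hj⟩]
  have := PresentedGroup.one_of_mem (rels := braidRels m)
    (x := FreeGroup.of (⟨i - 1, by omega⟩ : Fin (m - 1)) * FreeGroup.of ⟨j - 1, by omega⟩ *
      (FreeGroup.of ⟨j - 1, by omega⟩ * FreeGroup.of ⟨i - 1, by omega⟩)⁻¹)
    (Or.inl ⟨_, _, Or.inl (by simp; omega), rfl⟩)
  rw [map_mul, map_inv, mul_inv_eq_one, map_mul, map_mul] at this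
  exact this

lemma gen_braid {m i : ℕ} (hi : 1 ≤ i) (hj : i + 1 ≤ m - 1) :
    braidGen m i * braidGen m (i + 1) * braidGen m i =
      braidGen m (i + 1) * braidGen m i * braidGen m (i + 1) := by
  unfold braidGen
  rw [dif_pos ⟨hi, by omega⟩, dif_pos ⟨by omega, hj⟩]
  have := PresentedGroup.one_of_mem (rels := braidRels m)
    (x := FreeGroup.of (⟨i - 1, by omega⟩ : Fin (m - 1)) * FreeGroup.of ⟨i + 1 - 1, by omega⟩ *
      FreeGroup.of ⟨i - 1, by omega⟩ *
      (FreeGroup.of ⟨i + 1 - 1, by omega⟩ * FreeGroup.of ⟨i - 1, by omega⟩ *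
        FreeGroup.of ⟨i + 1 - 1, by omega⟩)⁻¹)
    (Or.inr ⟨_, _, Or.inl (by simp; omega), rfl⟩)
  rw [map_mul, map_inv, mul_inv_eq_one, map_mul, map_mul, map_mul, map_mul] at this
  exact this

/-- `D m n = σ_1 ⋯ σ_n`. -/
def D (m n : ℕ) : BraidGroup m := ((List.range n).map (fun t => braidGen m (t + 1))).prod

/-- `E m n = σ_2 ⋯ σ_{n+1}`. -/
def E (m n : ℕ) : BraidGroup m := ((List.range n).map (fun t => braidGen m (t + 2))).prod

lemma D_succ (m n : ℕ) : D m (n + 1) = D m n * braidGen m (n + 1) := by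
  simp [D, List.range_succ]

lemma E_succ (m n : ℕ) : E m (n + 1) = E m n * braidGen m (n + 2) := by
  simp [E, List.range_succ]

lemma D_eq_E (m n : ℕ) : D m (n + 1) = braidGen m 1 * E m n := by
  induction n with
  | zero => simp [D, E]
  | succ n ih => rw [D_succ, ih, E_succ, mul_assoc]

lemma D_comm {m : ℕ} (n j : ℕ) (h : n + 2 ≤ j) (hj : j ≤ m - 1) :
    D m n * braidGen m j = braidGen m j * D m n := by
  induction n with
  | zero => simp [D]
  | succ n ih =>
    rw [D_succ, mul_assoc, gen_comm (by omega) (by omega) hj, ← mul_assoc, ih (by omega),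
      mul_assoc]

lemma D_shift {m : ℕ} (n i : ℕ) (hn : n ≤ m - 1) (hi : 1 ≤ i) (hin : i < n) :
    D m n * braidGen m i = braidGen m (i + 1) * D m n := by
  induction n with
  | zero => omega
  | succ n ih =>
    rcases Nat.lt_or_ge i n with h | h
    · rw [D_succ, mul_assoc, ← gen_comm hi (by omega) hn, ← mul_assoc, ih (by omega) h, mul_assoc]
    · obtain rfl : i = n := by omega
      obtain ⟨k, rfl⟩ : ∃ k, i = k + 1 := ⟨i - 1, by omega⟩
      rw [D_succ, D_succ]
      have h1 := gen_braid hi hn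
      have h2 := D_comm k (k + 1 + 1) (by omega) hn
      calc _ = D m k * (braidGen m (k + 1) * braidGen m (k + 1 + 1) * braidGen m (k + 1)) := by
            group
        _ = (D m k * braidGen m (k + 1 + 1)) * braidGen m (k + 1) * braidGen m (k + 1 + 1) := by
            rw [h1]; group
        _ = _ := by rw [h2]; group

lemma D_D {m : ℕ} (n k : ℕ) (hn : n ≤ m - 1) (hk : k < n) :
    D m n * D m k = E m k * D m n := by
  induction k with
  | zero => simp [D, E]
  | succ k ih =>
    rw [D_succ, E_succ, ← mul_assoc, ih (by omega), mul_assoc, D_shift n (k + 1) hn (by omega) hk,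
      mul_assoc]

lemma pow_shift {m : ℕ} (k : ℕ) (hk : k + 1 ≤ m - 1) :
    D m (m - 1) ^ k * braidGen m 1 = braidGen m (k + 1) * D m (m - 1) ^ k := by
  induction k with
  | zero => simp
  | succ k ih =>
    rw [pow_succ', mul_assoc, ih (by omega), ← mul_assoc,
      D_shift (m - 1) (k + 1) le_rfl (by omega) (by omega), mul_assoc]

lemma central {m : ℕ} (hm : 4 ≤ m) : Commute (D m (m - 1) ^ m) (braidGen m 1) := by
  obtain ⟨n, rfl⟩ : ∃ n, m = n + 2 := ⟨m - 2, by omega⟩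
  have h1 := pow_shift (m := n + 2) n (by omega)
  have h2 := D_D (m := n + 2) (n + 1) n (by omega) (by omega)
  have h3 := D_succ (n + 2) n
  have h4 := D_eq_E (n + 2) n
  simp only [show n + 2 - 1 = n + 1 by omega] at *
  set d := D (n + 2) (n + 1)
  have h5 : d ^ 2 * braidGen (n + 2) (n + 1) = braidGen (n + 2) 1 * d ^ 2 := by
    calc _ = d * d * braidGen (n + 2) (n + 1) := by rw [pow_two]
      _ = braidGen (n + 2) 1 * (E (n + 2) n * d) * braidGen (n + 2) (n + 1) := by
          nth_rewrite 1 [h4]; group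
      _ = braidGen (n + 2) 1 * (d * (D (n + 2) n * braidGen (n + 2) (n + 1))) := by
          rw [← h2]; group
      _ = _ := by rw [← h3, pow_two]
  show d ^ (n + 2) * _ = _ * d ^ (n + 2)
  have h6 : d ^ (n + 2) = d ^ 2 * d ^ n := by rw [← pow_add]; congr 1; omega
  rw [h6, mul_assoc, h1, ← mul_assoc, h5, mul_assoc]

/-- Permutation representation. -/
def permHom (m : ℕ) : BraidGroup m →* Equiv.Perm ℕ :=
  PresentedGroup.toGroup (f := fun i => Equiv.swap i.val (i.val + 1)) (by
    rintro r (⟨i, j, h, rfl⟩ | ⟨i, j, h, rfl⟩)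
    · simp only [map_mul, map_inv, FreeGroup.lift_apply_of, mul_inv_eq_one]
      ext x
      simp only [Equiv.Perm.mul_apply, Equiv.swap_apply_def]
      grind
    · simp only [map_mul, map_inv, FreeGroup.lift_apply_of, mul_inv_eq_one]
      ext x
      simp only [Equiv.Perm.mul_apply, Equiv.swap_apply_def]
      grind)

lemma permHom_gen {m i : ℕ} (hi : i + 1 ≤ m - 1) :
    permHom m (braidGen m (i + 1)) = Equiv.swap i (i + 1) := by
  unfold braidGen permHom
  rw [dif_pos ⟨by omega, hi⟩]
  simp

lemma permHom_D_fix {m : ℕ} (n x : ℕ) (hn : n ≤ m - 1) (hx : n < x) :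
    permHom m (D m n) x = x := by
  induction n with
  | zero => simp [D]
  | succ n ih =>
    rw [D_succ, map_mul, permHom_gen hn, Equiv.Perm.mul_apply,
      Equiv.swap_apply_of_ne_of_ne (by omega) (by omega), ih (by omega) (by omega)]

lemma permHom_D {m : ℕ} (n x : ℕ) (hn : n ≤ m - 1) (hx : x < n) :
    permHom m (D m n) x = x + 1 := by
  induction n with
  | zero => omega
  | succ n ih =>
    rw [D_succ, map_mul, permHom_gen hn, Equiv.Perm.mul_apply]
    rcases Nat.lt_or_ge x n with h | h
    · rw [Equiv.swap_apply_of_ne_of_ne (by omega) (by omega), ih (by omega) h]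
    · obtain rfl : x = n := by omega
      rw [Equiv.swap_apply_left, permHom_D_fix x (x + 1) (by omega) (by omega)]

lemma permHom_pow {m : ℕ} (k : ℕ) (hk : k ≤ m - 1) :
    (permHom m (D m (m - 1)) ^ k) 0 = k := by
  induction k with
  | zero => simp
  | succ k ih =>
    rw [pow_succ', Equiv.Perm.mul_apply, ih (by omega), permHom_D _ _ le_rfl (by omega)]

lemma not_comm {m : ℕ} (hm : 4 ≤ m) (k : ℕ) (h0 : 0 < k) (hk : k < m) :
    ¬ Commute (D m (m - 1) ^ k) (braidGen m 1) := by
  intro h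
  have h1 := congrArg (fun g => permHom m g 0) h.eq
  have hg : permHom m (braidGen m 1) = Equiv.swap 0 1 := permHom_gen (m := m) (i := 0) (by omega)
  have hp := permHom_pow (m := m) k (by omega)
  simp only [map_mul, map_pow, hg, Equiv.Perm.mul_apply, Equiv.swap_apply_left, hp] at h1
  rcases Nat.lt_or_ge k 2 with h2 | h2
  · obtain rfl : k = 1 := by omega
    rw [pow_one, permHom_D _ _ le_rfl (by omega)] at h1
    simp at h1
  · rw [Equiv.swap_apply_of_ne_of_ne (by omega) (by omega)] at h1
    exact one_ne_zero (Equiv.injective _ (h1.trans hp.symm))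

lemma exp_gen {m i : ℕ} (h : 1 ≤ i) (hi : i ≤ m - 1) :
    expSumHom (braidGen m i) = Multiplicative.ofAdd 1 := by
  unfold braidGen expSumHom
  rw [dif_pos ⟨h, hi⟩]
  simp

lemma exp_E {m : ℕ} (n : ℕ) (hn : n + 1 ≤ m - 1) :
    expSumHom (E m n) = Multiplicative.ofAdd (n : ℤ) := by
  induction n with
  | zero => simp [E]
  | succ n ih =>
    rw [E_succ, map_mul, ih (by omega), exp_gen (by omega) (by omega), ← ofAdd_add]
    push_cast; rfl

section move
variable {G : Type*} [Group G]

/-- The Hurwitz move on pairs. -/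
def T : Equiv.Perm (Fin 2 → G) := hEquiv (n := 2) (0 : Fin 1)

lemma T_apply (a b : G) : T ![a, b] = ![b, b⁻¹ * a * b] := by
  funext k
  fin_cases k <;> simp [T, hEquiv]

lemma T_even (a b : G) (k : ℕ) : T^[2 * k] ![a, b] =
    ![((a * b) ^ k)⁻¹ * a * (a * b) ^ k, ((a * b) ^ k)⁻¹ * b * (a * b) ^ k] := by
  induction k with
  | zero => simp
  | succ k ih =>
    rw [show 2 * (k + 1) = (2 * k).succ.succ by omega, Function.iterate_succ_apply',
      Function.iterate_succ_apply', ih, T_apply, T_apply, pow_succ (a * b) k]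
    have hc : (a * b) ^ k * (a * b) = (a * b) * (a * b) ^ k := by rw [← pow_succ, pow_succ']
    congr 1
    · generalize hp : (a * b) ^ k = p at *
      have : p * (a * b) * p⁻¹ = a * b := by rw [hc]; group
      rw [hc]
      group
    · generalize hp : (a * b) ^ k = p at *
      rw [hc]
      funext i
      simp
      group

lemma orbit_eq_s5 (s : Fin 2 → G) :
    hurwitzOrbit s = MulAction.orbit (Subgroup.zpowers (T (G := G))) s := by
  ext t
  constructor
  · rintro ⟨w, rfl⟩
    have key : ∀ w : FreeGroup (Fin (2 - 1)),
        (MulOpposite.unop (FreeGroup.lift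
          (fun i => MulOpposite.op (hEquiv (G := G) (n := 2) i)) w)) ∈
          Subgroup.zpowers (T (G := G)) := by
      intro w
      induction w using FreeGroup.induction_on with
      | C1 => simp
      | of i =>
        rw [FreeGroup.lift_apply_of, MulOpposite.unop_op]
        obtain rfl : i = (0 : Fin 1) := Subsingleton.elim (α := Fin 1) _ _
        exact Subgroup.mem_zpowers _
      | inv_of i h =>
        rw [map_inv, MulOpposite.unop_inv]
        exact inv_mem h
      | mul x y hx hy =>
        rw [map_mul, MulOpposite.unop_mul]
        exact mul_mem hy hx
    exact ⟨⟨_, key w⟩, rfl⟩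
  · rintro ⟨⟨_, z, rfl⟩, rfl⟩
    refine ⟨FreeGroup.of (0 : Fin 1) ^ z, ?_⟩
    unfold hurwitzAct
    rw [map_zpow, FreeGroup.lift_apply_of, MulOpposite.unop_zpow]
    rfl

lemma orbit_ncard (s : Fin 2 → G) :
    (hurwitzOrbit s).ncard = Function.minimalPeriod (T (G := G)) s := by
  rw [orbit_eq_s5]
  have := Nat.card_congr (MulAction.orbitZPowersEquiv (T (G := G)) s)
  rw [Nat.card_zmod] at this
  exact this

end move

end HurwitzAux

open HurwitzAux in
/-- For every `m ≥ 4`, the Hurwitz orbit of `(σ_1, σ_2 σ_3 ⋯ σ_{m-1})`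
has exactly `2m` elements. -/
theorem hurwitzOrbit_card_eq_two_mul {m : ℕ} (hm : 4 ≤ m) :
    (hurwitzOrbit
      ![braidGen m 1, ((List.range (m - 2)).map (fun t => braidGen m (t + 2))).prod]).ncard
      = 2 * m := by
  change (hurwitzOrbit ![braidGen m 1, E m (m - 2)]).ncard = 2 * m
  have hD : braidGen m 1 * E m (m - 2) = D m (m - 1) := by
    rw [← D_eq_E]; congr 1; omega
  have hper : Function.IsPeriodicPt T (2 * m) ![braidGen m 1, E m (m - 2)] := by
    have hc := central hm
    have hc2 : Commute (D m (m - 1) ^ m) (E m (m - 2)) := by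
      have : E m (m - 2) = (braidGen m 1)⁻¹ * D m (m - 1) := by rw [← hD]; group
      rw [this]
      exact hc.inv_right.mul_right ((Commute.refl _).pow_left m)
    unfold Function.IsPeriodicPt Function.IsFixedPt
    rw [T_even, hD, mul_assoc, ← hc.eq, mul_assoc, ← hc2.eq]
    simp
  have hpos := hper.minimalPeriod_pos (by omega)
  have hle := hper.minimalPeriod_le (by omega)
  rw [orbit_ncard]
  refine le_antisymm hle (not_lt.1 fun hlt => ?_)
  have hmin := Function.isPeriodicPt_minimalPeriod T ![braidGen m 1, E m (m - 2)]
  generalize Function.minimalPeriod T ![braidGen m 1, E m (m - 2)] = p at *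
  unfold Function.IsPeriodicPt Function.IsFixedPt at hmin
  obtain ⟨k, rfl | rfl⟩ := Nat.even_or_odd' p
  · rw [T_even, hD] at hmin
    have h0 := congrFun hmin 0
    simp only [Matrix.cons_val_zero] at h0
    apply not_comm hm k (by omega) (by omega)
    rw [mul_assoc, inv_mul_eq_iff_eq_mul] at h0
    exact h0.symm
  · rw [Function.iterate_succ_apply', T_even, T_apply] at hmin
    have h0 := congrArg expSumHom (congrFun hmin 0)
    simp only [Matrix.cons_val_zero, map_mul, map_inv] at h0
    rw [exp_E _ (by omega), exp_gen le_rfl (by omega), mul_comm, mul_inv_cancel_left] at h0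
    have := Multiplicative.ofAdd.injective h0
    omega
end

section
/- Let s = (β_1,…,β_n) ∈ B_m^n be a reducible braid system, with non-trivial partition I ⊔ J of {1,2,…,n} such that β_iβ_j = β_jβ_i for all i ∈ I, j ∈ J, where #I = l. Let s' = (β_{i_1},…,β_{i_l}) ∈ B_m^l with i_1 < ⋯ < i_l the elements of I, and s'' = (β_{j_1},…,β_{j_{n-l}}) ∈ B_m^{n-l} with j_1 < ⋯ < j_{n-l} the elements of J. If the Hurwitz orbit s·B_n is finite, then the Hurwitz orbits s'·B_l and s''·B_{n-l} are also finite, and #(s·B_n) ≤ binom(n, l) · #(s'·B_l) · #(s''·B_{n-l}). -/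
namespace HurwitzAux

variable {G : Type*} [Group G]

theorem act_one {n : ℕ} (s : Fin n → G) : hurwitzAct 1 s = s := by
  simp [hurwitzAct]

theorem act_mul {n : ℕ} (w v : FreeGroup (Fin (n - 1))) (s : Fin n → G) :
    hurwitzAct (w * v) s = hurwitzAct v (hurwitzAct w s) := by
  simp [hurwitzAct]

theorem act_of {n : ℕ} (i : Fin (n - 1)) (s : Fin n → G) :
    hurwitzAct (FreeGroup.of i) s = hEquiv i s := by
  simp [hurwitzAct]

theorem act_inv_of {n : ℕ} (i : Fin (n - 1)) (s : Fin n → G) :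
    hurwitzAct (FreeGroup.of i)⁻¹ s = (hEquiv i).symm s := by
  simp [hurwitzAct, Equiv.Perm.inv_def]

theorem orbit_self {n : ℕ} (s : Fin n → G) : s ∈ hurwitzOrbit s := ⟨1, act_one s⟩

theorem orbit_step {n : ℕ} {s t : Fin n → G} (i : Fin (n - 1)) (h : t ∈ hurwitzOrbit s) :
    hEquiv i t ∈ hurwitzOrbit s := by
  obtain ⟨w, rfl⟩ := h
  exact ⟨w * FreeGroup.of i, by rw [act_mul, act_of]⟩

theorem orbit_symm {n : ℕ} {s t : Fin n → G} (i : Fin (n - 1)) (h : t ∈ hurwitzOrbit s) :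
    (hEquiv i).symm t ∈ hurwitzOrbit s := by
  obtain ⟨w, rfl⟩ := h
  exact ⟨w * (FreeGroup.of i)⁻¹, by rw [act_mul, act_inv_of]⟩

/-- Induction principle for Hurwitz orbits. -/
theorem orbit_ind {n : ℕ} {s : Fin n → G} (P : (Fin n → G) → Prop) (h0 : P s)
    (h1 : ∀ i t, P t → P (hEquiv i t)) (h2 : ∀ i t, P t → P ((hEquiv i).symm t))
    {t : Fin n → G} (ht : t ∈ hurwitzOrbit s) : P t := by
  obtain ⟨w, rfl⟩ := ht
  have : ∀ s, P s → P (hurwitzAct w s) := by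
    induction w using FreeGroup.induction_on with
    | C1 => intro s hs; rwa [act_one]
    | of i => intro s hs; rw [act_of]; exact h1 _ _ hs
    | inv_of i _ => intro s hs; rw [act_inv_of]; exact h2 _ _ hs
    | mul x y hx hy => intro s hs; rw [act_mul]; exact hy _ (hx _ hs)
  exact this s h0

def p0 {n : ℕ} (p : Fin (n - 1)) : Fin n := ⟨p.val, by have := p.isLt; omega⟩
def p1 {n : ℕ} (p : Fin (n - 1)) : Fin n := ⟨p.val + 1, by have := p.isLt; omega⟩

theorem p0_ne_p1 {n : ℕ} (p : Fin (n - 1)) : p0 p ≠ p1 p := by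
  simp [p0, p1, Fin.ext_iff]

theorem h_p0 {n : ℕ} (p : Fin (n - 1)) (t : Fin n → G) : hEquiv p t (p0 p) = t (p1 p) := by
  simp [hEquiv, p0, p1]

theorem h_p1 {n : ℕ} (p : Fin (n - 1)) (t : Fin n → G) :
    hEquiv p t (p1 p) = (t (p1 p))⁻¹ * t (p0 p) * t (p1 p) := by
  simp [hEquiv, p0, p1]

theorem h_ne {n : ℕ} (p : Fin (n - 1)) (t : Fin n → G) (k : Fin n) (h0 : k ≠ p0 p)
    (h1 : k ≠ p1 p) : hEquiv p t k = t k := by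
  simp only [p0, p1, ne_eq, Fin.ext_iff] at h0 h1
  simp [hEquiv, h0, h1]

theorem s_p0 {n : ℕ} (p : Fin (n - 1)) (t : Fin n → G) :
    (hEquiv p).symm t (p0 p) = t (p0 p) * t (p1 p) * (t (p0 p))⁻¹ := by
  simp [hEquiv, p0, p1]

theorem s_p1 {n : ℕ} (p : Fin (n - 1)) (t : Fin n → G) :
    (hEquiv p).symm t (p1 p) = t (p0 p) := by
  simp [hEquiv, p0, p1]

theorem s_ne {n : ℕ} (p : Fin (n - 1)) (t : Fin n → G) (k : Fin n) (h0 : k ≠ p0 p)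
    (h1 : k ≠ p1 p) : (hEquiv p).symm t k = t k := by
  simp only [p0, p1, ne_eq, Fin.ext_iff] at h0 h1
  simp [hEquiv, h0, h1]

theorem mixed {n : ℕ} (p : Fin (n - 1)) (t : Fin n → G) (h : Commute (t (p0 p)) (t (p1 p))) :
    hEquiv p t = t ∘ Equiv.swap (p0 p) (p1 p) := by
  funext k
  by_cases h0 : k = p0 p
  · subst h0; simp [h_p0]
  by_cases h1 : k = p1 p
  · subst h1; simp [h_p1, mul_assoc, h.eq]
  simp [h_ne p t k h0 h1, Equiv.swap_apply_of_ne_of_ne h0 h1]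

theorem mixed_symm {n : ℕ} (p : Fin (n - 1)) (t : Fin n → G)
    (h : Commute (t (p0 p)) (t (p1 p))) :
    (hEquiv p).symm t = t ∘ Equiv.swap (p0 p) (p1 p) := by
  funext k
  by_cases h0 : k = p0 p
  · subst h0; simp [s_p0, h.eq]
  by_cases h1 : k = p1 p
  · subst h1; simp [s_p1]
  simp [s_ne p t k h0 h1, Equiv.swap_apply_of_ne_of_ne h0 h1]

/-- Entries of systems in the orbit stay in the subgroup generated. -/
theorem orbit_mem {n : ℕ} {s t : Fin n → G} (H : Subgroup G) (hs : ∀ k, s k ∈ H)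
    (ht : t ∈ hurwitzOrbit s) : ∀ k, t k ∈ H := by
  refine orbit_ind (fun t => ∀ k, t k ∈ H) hs ?_ ?_ ht
  · intro p t h k
    by_cases h0 : k = p0 p
    · subst h0; rw [h_p0]; exact h _
    by_cases h1 : k = p1 p
    · subst h1; rw [h_p1]; exact H.mul_mem (H.mul_mem (H.inv_mem (h _)) (h _)) (h _)
    rw [h_ne p t k h0 h1]; exact h _
  · intro p t h k
    by_cases h0 : k = p0 p
    · subst h0; rw [s_p0]; exact H.mul_mem (H.mul_mem (h _) (h _)) (H.inv_mem (h _))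
    by_cases h1 : k = p1 p
    · subst h1; rw [s_p1]; exact h _
    rw [s_ne p t k h0 h1]; exact h _

theorem orbit_comm {l k : ℕ} {s' t' : Fin l → G} {s'' t'' : Fin k → G}
    (h : ∀ a b, Commute (s' a) (s'' b)) (h' : t' ∈ hurwitzOrbit s')
    (h'' : t'' ∈ hurwitzOrbit s'') : ∀ a b, Commute (t' a) (t'' b) := by
  have h1 : ∀ b a, Commute (t' a) (s'' b) := by
    intro b a
    have := orbit_mem (Subgroup.centralizer {s'' b}) (fun a => by
      rw [Subgroup.mem_centralizer_singleton_iff]; exact (h a b).eq) h' a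
    rw [Subgroup.mem_centralizer_singleton_iff] at this
    exact this
  intro a b
  have := orbit_mem (Subgroup.centralizer {t' a}) (fun b => by
      rw [Subgroup.mem_centralizer_singleton_iff]; exact (h1 b a).eq.symm) h'' b
  rw [Subgroup.mem_centralizer_singleton_iff] at this
  exact Eq.symm this

structure Conf {n l k : ℕ} (ι : Fin l → Fin n) (κ : Fin k → Fin n) : Prop where
  mi : StrictMono ι
  mkk : StrictMono κ
  disj : ∀ a b, ι a ≠ κ b
  cover : ∀ p : Fin n, (∃ a, ι a = p) ∨ (∃ b, κ b = p)

theorem Conf.flip {n l k : ℕ} {ι : Fin l → Fin n} {κ : Fin k → Fin n} (h : Conf ι κ) :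
    Conf κ ι :=
  ⟨h.mkk, h.mi, fun a b => (h.disj b a).symm, fun p => (h.cover p).symm⟩

theorem swap_val {n : ℕ} (p : Fin (n - 1)) (x : Fin n) :
    (Equiv.swap (p0 p) (p1 p) x).val =
      if x.val = p.val then p.val + 1 else if x.val = p.val + 1 then p.val else x.val := by
  by_cases h0 : x = p0 p
  · subst h0; simp [p0, p1]
  by_cases h1 : x = p1 p
  · subst h1; simp [p0, p1]
  rw [Equiv.swap_apply_of_ne_of_ne h0 h1]
  simp only [p0, p1, Fin.ext_iff] at h0 h1
  simp [h0, h1]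

theorem swap_mono {n l : ℕ} (p : Fin (n - 1)) {ι : Fin l → Fin n} (hι : StrictMono ι)
    (h : (∀ a, ι a ≠ p0 p) ∨ (∀ a, ι a ≠ p1 p)) :
    StrictMono (Equiv.swap (p0 p) (p1 p) ∘ ι) := by
  intro a b hab
  have h1 : (ι a).val < (ι b).val := hι hab
  change (Equiv.swap (p0 p) (p1 p) (ι a)).val < (Equiv.swap (p0 p) (p1 p) (ι b)).val
  rw [swap_val, swap_val]
  simp only [p0, p1, ne_eq, Fin.ext_iff] at h
  rcases h with h | h
  · have := h a; have := h b
    split_ifs <;> omega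
  · have := h a; have := h b
    split_ifs <;> omega

theorem Conf.swap {n l k : ℕ} {ι : Fin l → Fin n} {κ : Fin k → Fin n} (h : Conf ι κ)
    (p : Fin (n - 1)) {a b} (ha : ι a = p0 p) (hb : κ b = p1 p) :
    Conf (Equiv.swap (p0 p) (p1 p) ∘ ι) (Equiv.swap (p0 p) (p1 p) ∘ κ) := by
  refine ⟨swap_mono p h.mi (Or.inr fun c hc => h.disj c b (hc.trans hb.symm)),
    swap_mono p h.mkk (Or.inl fun c hc => h.disj a c (ha.trans hc.symm)), ?_, ?_⟩
  · intro c d hcd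
    exact h.disj c d ((Equiv.swap (p0 p) (p1 p)).injective hcd)
  · intro x
    rcases h.cover (Equiv.swap (p0 p) (p1 p) x) with ⟨c, hc⟩ | ⟨c, hc⟩
    · exact Or.inl ⟨c, by simp [hc]⟩
    · exact Or.inr ⟨c, by simp [hc]⟩

theorem adj {n l : ℕ} {ι : Fin l → Fin n} (hι : StrictMono ι) (p : Fin (n - 1)) {a b : Fin l}
    (ha : ι a = p0 p) (hb : ι b = p1 p) : ∃ q : Fin (l - 1), a = p0 q ∧ b = p1 q := by
  have hab : a < b := by
    rw [← hι.lt_iff_lt, ha, hb]; simp [p0, p1, Fin.lt_def]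
  have hab' : a.val < b.val := hab
  have hb' : b.val = a.val + 1 := by
    by_contra hne
    have hlt : a.val + 1 < b.val := by omega
    have := b.isLt
    have h1 : (ι a).val < (ι ⟨a.val + 1, by omega⟩).val := hι (by simp [Fin.lt_def])
    have h2 : (ι ⟨a.val + 1, by omega⟩).val < (ι b).val := hι (by simpa [Fin.lt_def] using hlt)
    rw [ha] at h1
    rw [hb] at h2
    simp only [p0, p1] at h1 h2
    omega
  exact ⟨⟨a.val, by have := b.isLt; omega⟩, by simp [p0], by simp [p1, Fin.ext_iff, hb']⟩

theorem same {n l : ℕ} {ι : Fin l → Fin n} (hι : Function.Injective ι) (p : Fin (n - 1))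
    (q : Fin (l - 1)) (ha : ι (p0 q) = p0 p) (hb : ι (p1 q) = p1 p) (t : Fin n → G) :
    hEquiv p t ∘ ι = hEquiv q (t ∘ ι) ∧ (hEquiv p).symm t ∘ ι = (hEquiv q).symm (t ∘ ι) := by
  constructor
  all_goals
    funext k
    by_cases h0 : k = p0 q
    · subst h0; simp [ha, hb, h_p0, s_p0]
    by_cases h1 : k = p1 q
    · subst h1; simp [ha, hb, h_p1, s_p1]
    have h0' : ι k ≠ p0 p := fun h => h0 (hι (h.trans ha.symm))
    have h1' : ι k ≠ p1 p := fun h => h1 (hι (h.trans hb.symm))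
    simp [h_ne, s_ne, h0, h1, h0', h1']

theorem other {n k : ℕ} {κ : Fin k → Fin n} (p : Fin (n - 1))
    (h0 : ∀ b, κ b ≠ p0 p) (h1 : ∀ b, κ b ≠ p1 p) (t : Fin n → G) :
    hEquiv p t ∘ κ = t ∘ κ ∧ (hEquiv p).symm t ∘ κ = t ∘ κ := by
  constructor
  all_goals
    funext b
    simp [h_ne, s_ne, h0, h1]

/-- `t` is a shuffle of elements of the orbits of `s'` and `s''`. -/
def Shuf {n l k : ℕ} (s' : Fin l → G) (s'' : Fin k → G) (t : Fin n → G) : Prop :=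
  ∃ (ι : Fin l → Fin n) (κ : Fin k → Fin n), Conf ι κ ∧ t ∘ ι ∈ hurwitzOrbit s' ∧
    t ∘ κ ∈ hurwitzOrbit s''

theorem Shuf.flip {n l k : ℕ} {s' : Fin l → G} {s'' : Fin k → G} {t : Fin n → G}
    (h : Shuf s' s'' t) : Shuf s'' s' t := by
  obtain ⟨ι, κ, h, h1, h2⟩ := h
  exact ⟨κ, ι, h.flip, h2, h1⟩

theorem step_aux {n l k : ℕ} {s' : Fin l → G} {s'' : Fin k → G}
    (hc : ∀ a b, Commute (s' a) (s'' b)) (p : Fin (n - 1)) (t : Fin n → G)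
    {ι : Fin l → Fin n} {κ : Fin k → Fin n} (h : Conf ι κ) (h1 : t ∘ ι ∈ hurwitzOrbit s')
    (h2 : t ∘ κ ∈ hurwitzOrbit s'') {a : Fin l} (ha : ι a = p0 p) :
    Shuf s' s'' (hEquiv p t) ∧ Shuf s' s'' ((hEquiv p).symm t) := by
  rcases h.cover (p1 p) with ⟨b, hb⟩ | ⟨b, hb⟩
  · obtain ⟨q, rfl, rfl⟩ := adj h.mi p ha hb
    obtain ⟨e1, e2⟩ := same h.mi.injective p q ha hb t
    obtain ⟨e3, e4⟩ := other (κ := κ) p (fun c hc => h.disj _ c (ha.trans hc.symm))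
      (fun c hc => h.disj _ c (hb.trans hc.symm)) t
    exact ⟨⟨ι, κ, h, e1 ▸ orbit_step q h1, e3 ▸ h2⟩, ⟨ι, κ, h, e2 ▸ orbit_symm q h1, e4 ▸ h2⟩⟩
  · have hcm : Commute (t (p0 p)) (t (p1 p)) := by
      have := orbit_comm hc h1 h2 a b
      simpa [ha, hb] using this
    have key : Shuf s' s'' (t ∘ Equiv.swap (p0 p) (p1 p)) := by
      refine ⟨_, _, h.swap p ha hb, ?_, ?_⟩
      · convert h1 using 1; funext c; simp
      · convert h2 using 1; funext c; simp
    rw [mixed p t hcm, mixed_symm p t hcm]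
    exact ⟨key, key⟩

theorem step {n l k : ℕ} {s' : Fin l → G} {s'' : Fin k → G}
    (hc : ∀ a b, Commute (s' a) (s'' b)) (p : Fin (n - 1)) (t : Fin n → G)
    (h : Shuf s' s'' t) :
    Shuf s' s'' (hEquiv p t) ∧ Shuf s' s'' ((hEquiv p).symm t) := by
  obtain ⟨ι, κ, h, h1, h2⟩ := h
  rcases h.cover (p0 p) with ⟨a, ha⟩ | ⟨a, ha⟩
  · exact step_aux hc p t h h1 h2 ha
  · have := step_aux (fun a b => (hc b a).symm) p t h.flip h2 h1 ha
    exact ⟨this.1.flip, this.2.flip⟩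

/-- Moving the first part to the front. -/
theorem normal {n l k : ℕ} (hl : l ≤ n) (s : Fin n → G) :
    ∀ (N : ℕ) (t : Fin n → G) (ι : Fin l → Fin n) (κ : Fin k → Fin n), Conf ι κ →
      (∀ a b, Commute (t (ι a)) (t (κ b))) → t ∈ hurwitzOrbit s → ∑ a, (ι a).val ≤ N →
      ∃ t0 ∈ hurwitzOrbit s, t0 ∘ Fin.castLE hl = t ∘ ι := by
  intro N
  induction N with
  | zero =>
    intro t ι κ h hc ht hN
    refine ⟨t, ht, ?_⟩
    congr 1
    have h0 : ∀ a, (ι a).val = 0 := by simpa using hN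
    funext a
    have hle : ∀ j : ℕ, ∀ (hj : j < l), j ≤ (ι ⟨j, hj⟩).val := by
      intro j
      induction j with
      | zero => intro hj; exact Nat.zero_le _
      | succ j ih =>
        intro hj
        have h1 := ih (by omega)
        have h2 : (ι ⟨j, by omega⟩).val < (ι ⟨j + 1, hj⟩).val := h.mi (by simp [Fin.lt_def])
        omega
    have := hle a.val a.isLt
    have := h0 a
    apply Fin.ext
    simp only [Fin.val_castLE, Fin.eta] at *
    omega
  | succ N ih =>
    intro t ι κ h hc ht hN
    by_cases hall : ∀ a, (ι a).val = a.val
    · refine ⟨t, ht, ?_⟩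
      congr 1
      funext a
      exact Fin.ext (hall a).symm
    · have hex : ∃ j : ℕ, ∃ hj : j < l, (ι ⟨j, hj⟩).val ≠ j := by
        push Not at hall
        obtain ⟨a, ha⟩ := hall
        exact ⟨a.val, a.isLt, ha⟩
      classical
      obtain ⟨hj, hne⟩ := Nat.find_spec hex
      have hmin : ∀ i, i < Nat.find hex → ∀ hi : i < l, (ι ⟨i, hi⟩).val = i := by
        intro i hi hil
        by_contra hcon
        exact Nat.find_min hex hi ⟨hil, hcon⟩
      generalize Nat.find hex = j at hj hne hmin
      have hgt : j < (ι ⟨j, hj⟩).val := by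
        rcases Nat.eq_zero_or_pos j with h0 | h0
        · omega
        · have h1 := hmin (j - 1) (by omega) (by omega)
          have h2 : (ι ⟨j - 1, by omega⟩).val < (ι ⟨j, hj⟩).val :=
            h.mi (by simp [Fin.lt_def]; omega)
          omega
      have hlt := (ι ⟨j, hj⟩).isLt
      let p : Fin (n - 1) := ⟨(ι ⟨j, hj⟩).val - 1, by omega⟩
      have hp1 : ι ⟨j, hj⟩ = p1 p := by
        apply Fin.ext; simp only [p1, p]; omega
      have hp0 : ∀ a, ι a ≠ p0 p := by
        intro a ha
        have hav : (ι a).val = (ι ⟨j, hj⟩).val - 1 := by rw [ha]; simp [p0, p]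
        have haj : a < ⟨j, hj⟩ := by
          rw [← h.mi.lt_iff_lt, Fin.lt_def]; omega
        have := hmin a.val haj a.isLt
        have haj' : a.val < j := haj
        simp only [Fin.eta] at this
        omega
      rcases h.cover (p0 p) with ⟨a, ha⟩ | ⟨b, hb⟩
      · exact absurd ha (hp0 a)
      have hcm : Commute (t (p0 p)) (t (p1 p)) := by
        have := hc ⟨j, hj⟩ b
        rw [hp1, hb] at this
        exact this.symm
      have hS := (h.flip.swap p hb hp1).flip
      obtain ⟨t0, ht0, e⟩ := ih (hEquiv p t) _ _ hS
        (by intro c d; rw [mixed p t hcm]; simpa using hc c d) (orbit_step p ht) (by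
          have : ∑ a, ((Equiv.swap (p0 p) (p1 p) ∘ ι) a).val < ∑ a, (ι a).val := by
            apply Finset.sum_lt_sum
            · intro c _
              have h3 := hp0 c
              simp only [p0, ne_eq, Fin.ext_iff] at h3
              simp only [Function.comp]
              rw [swap_val]
              split_ifs <;> omega
            · refine ⟨⟨j, hj⟩, Finset.mem_univ _, ?_⟩
              simp only [Function.comp]
              rw [hp1]
              simp [p0, p1]
          omega)
      refine ⟨t0, ht0, e.trans ?_⟩
      rw [mixed p t hcm]
      funext c
      simp

theorem fin_sub {n l k : ℕ} (hl : l ≤ n) (s : Fin n → G)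
    {ι : Fin l → Fin n} {κ : Fin k → Fin n} (h : Conf ι κ)
    (hc : ∀ a b, Commute (s (ι a)) (s (κ b))) (hfin : (hurwitzOrbit s).Finite) :
    (hurwitzOrbit (s ∘ ι)).Finite := by
  refine (hfin.image (fun t => t ∘ Fin.castLE hl)).subset ?_
  intro u hu
  refine orbit_ind (fun u => u ∈ (fun t => t ∘ Fin.castLE hl) '' hurwitzOrbit s) ?_ ?_ ?_ hu
  · obtain ⟨t0, h1, h2⟩ := normal hl s _ s ι κ h hc (orbit_self s) le_rfl
    exact ⟨t0, h1, h2⟩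
  all_goals
    rintro q _ ⟨t, ht, rfl⟩
    have hq := q.isLt
    let p : Fin (n - 1) := ⟨q.val, by omega⟩
    obtain ⟨e1, e2⟩ := same (ι := Fin.castLE hl) (Fin.castLE_injective hl) p q
      (by simp [p0, p, Fin.ext_iff]) (by simp [p1, p, Fin.ext_iff]) t
  · exact ⟨_, orbit_step p ht, e1⟩
  · exact ⟨_, orbit_symm p ht, e2⟩

theorem bound {n l k : ℕ} (s : Fin n → G)
    {ι : Fin l → Fin n} {κ : Fin k → Fin n} (h : Conf ι κ)
    (hc : ∀ a b, Commute (s (ι a)) (s (κ b)))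
    (f1 : (hurwitzOrbit (s ∘ ι)).Finite) (f2 : (hurwitzOrbit (s ∘ κ)).Finite) :
    (hurwitzOrbit s).ncard ≤
      n.choose l * (hurwitzOrbit (s ∘ ι)).ncard * (hurwitzOrbit (s ∘ κ)).ncard := by
  classical
  have hS : ∀ t, t ∈ hurwitzOrbit s → Shuf (s ∘ ι) (s ∘ κ) t := fun t ht =>
    orbit_ind (fun t => Shuf (s ∘ ι) (s ∘ κ) t) ⟨ι, κ, h, orbit_self _, orbit_self _⟩
      (fun i t ht => (step hc i t ht).1) (fun i t ht => (step hc i t ht).2) ht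
  haveI : Nonempty (Fin l → Fin n) := ⟨ι⟩
  haveI : Nonempty (Fin k → Fin n) := ⟨κ⟩
  choose! I K hIK h1 h2 using hS
  let T : Set (Finset (Fin n) × (Fin l → G) × (Fin k → G)) :=
    (↑(Finset.powersetCard l (Finset.univ : Finset (Fin n))) : Set (Finset (Fin n))) ×ˢ
      (hurwitzOrbit (s ∘ ι) ×ˢ hurwitzOrbit (s ∘ κ))
  have hT : T.ncard =
      n.choose l * (hurwitzOrbit (s ∘ ι)).ncard * (hurwitzOrbit (s ∘ κ)).ncard := by
    simp only [T]
    rw [Set.ncard_prod, Set.ncard_prod, Set.ncard_coe_finset, Finset.card_powersetCard]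
    simp [mul_assoc]
  rw [← hT]
  refine Set.ncard_le_ncard_of_injOn
    (fun t => (Finset.univ.image (I t), t ∘ I t, t ∘ K t)) ?_ ?_
    ((Finset.finite_toSet _).prod (f1.prod f2))
  · intro t ht
    refine ⟨?_, h1 t ht, h2 t ht⟩
    simp [Finset.mem_powersetCard, Finset.card_image_of_injective _ (hIK t ht).mi.injective]
  · intro t ht u hu e
    simp only [Prod.mk.injEq] at e
    obtain ⟨e1, e2, e3⟩ := e
    have hr : Set.range (I t) = Set.range (I u) := by
      have := congrArg (fun F : Finset (Fin n) => (F : Set (Fin n))) e1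
      simpa using this
    have hcompl : ∀ v ∈ hurwitzOrbit s, Set.range (K v) = (Set.range (I v))ᶜ := by
      intro v hv
      ext x
      constructor
      · rintro ⟨b, rfl⟩ ⟨a, ha⟩
        exact (hIK v hv).disj a b ha
      · intro hx
        rcases (hIK v hv).cover x with hx' | hx'
        · exact absurd hx' hx
        · exact hx'
    have hrk : Set.range (K t) = Set.range (K u) := by
      rw [hcompl t ht, hcompl u hu, hr]
    have eI : I t = I u := (StrictMono.range_inj (hIK t ht).mi (hIK u hu).mi).1 hr
    have eK : K t = K u := (StrictMono.range_inj (hIK t ht).mkk (hIK u hu).mkk).1 hrk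
    rw [eI] at e2
    rw [eK] at e3
    funext x
    rcases (hIK u hu).cover x with ⟨a, rfl⟩ | ⟨a, rfl⟩
    · exact congrFun e2 a
    · exact congrFun e3 a

end HurwitzAux

/-- For a reducible braid system with commuting parts enumerated (in
increasing order) by `ι` and `κ`, finiteness of the Hurwitz orbit implies finiteness of the
orbits of the two sub-systems, and the orbit size is bounded by
`binom(n,l) · #(s'·B_l) · #(s''·B_{n-l})`. -/
theorem reducible_hurwitzOrbit_bound {m n l : ℕ} (hl : 0 < l) (hln : l < n)
    (s : Fin n → BraidGroup m)
    (ι : Fin l → Fin n) (κ : Fin (n - l) → Fin n)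
    (hι : StrictMono ι) (hκ : StrictMono κ)
    (hdisj : ∀ a b, ι a ≠ κ b)
    (hcover : ∀ p : Fin n, (∃ a, ι a = p) ∨ (∃ b, κ b = p))
    (hcomm : ∀ a b, Commute (s (ι a)) (s (κ b)))
    (hfin : (hurwitzOrbit s).Finite) :
    (hurwitzOrbit (s ∘ ι)).Finite ∧ (hurwitzOrbit (s ∘ κ)).Finite ∧
      (hurwitzOrbit s).ncard ≤
        n.choose l * (hurwitzOrbit (s ∘ ι)).ncard * (hurwitzOrbit (s ∘ κ)).ncard := by
  have hC : HurwitzAux.Conf ι κ := ⟨hι, hκ, hdisj, hcover⟩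
  have f1 := HurwitzAux.fin_sub hln.le s hC hcomm hfin
  have f2 := HurwitzAux.fin_sub (Nat.sub_le n l) s hC.flip (fun a b => (hcomm b a).symm) hfin
  exact ⟨f1, f2, HurwitzAux.bound s hC hcomm f1 f2⟩
end

section
/- Let s = (β_1,…,β_n) ∈ B_m^n be a braid system, let 1 ≤ i ≤ n-1, and let k be any integer. Then s·c_i^k = (β_1^{(β_1β_{i+1})^k}, β_2^{(β_{i+1}β_1)^{-k}(β_1β_{i+1})^k}, …, β_i^{(β_{i+1}β_1)^{-k}(β_1β_{i+1})^k}, β_{i+1}^{(β_1β_{i+1})^k}, β_{i+2}, …, β_n), where x^g denotes g^{-1}xg; that is, the first entry and the (i+1)-st entry are conjugated by (β_1β_{i+1})^k, the entries in positions 2 through i are conjugated by (β_{i+1}β_1)^{-k}(β_1β_{i+1})^k, and the entries in positions i+2 through n are unchanged. -/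
theorem hurwitzAct_mul' {G : Type*} [Group G] {n : ℕ} (w v : FreeGroup (Fin (n - 1)))
    (s : Fin n → G) : hurwitzAct (w * v) s = hurwitzAct v (hurwitzAct w s) := by
  simp [hurwitzAct]

theorem hurwitzAct_one' {G : Type*} [Group G] {n : ℕ} 
    (s : Fin n → G) : hurwitzAct (1 : FreeGroup (Fin (n - 1))) s = s := by
  simp [hurwitzAct]

theorem hurwitzAct_inv_eq {G : Type*} [Group G] {n : ℕ} (w : FreeGroup (Fin (n - 1)))
    (s t : Fin n → G) (h : hurwitzAct w t = s) : hurwitzAct w⁻¹ s = t := by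
  rw [← h, ← hurwitzAct_mul', mul_inv_cancel, hurwitzAct_one']

theorem hurwitzAct_gen {G : Type*} [Group G] {n : ℕ} (j : ℕ) (hj : j + 1 ≤ n - 1)
    (s : Fin n → G) : hurwitzAct (genWord n (j + 1)) s = hEquiv ⟨j, by omega⟩ s := by
  have : 1 ≤ j + 1 ∧ j + 1 ≤ n - 1 := by omega
  simp [hurwitzAct, genWord, this]

theorem hurwitzAct_gen_inv {G : Type*} [Group G] {n : ℕ} (j : ℕ) (hj : j + 1 ≤ n - 1)
    (s : Fin n → G) :
    hurwitzAct (genWord n (j + 1))⁻¹ s = (hEquiv ⟨j, by omega⟩).symm s := by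
  apply hurwitzAct_inv_eq
  rw [hurwitzAct_gen j hj]
  simp

/-- The action of `σ_1⁻¹ ⋯ σ_j⁻¹`. -/
theorem hurwitzAct_prefix {G : Type*} [Group G] {n : ℕ} (s : Fin n → G) (j : ℕ)
    (hn : 1 ≤ n) (hj : j ≤ n - 1) :
    hurwitzAct ((List.range j).map (fun t => (genWord n (t + 1))⁻¹)).prod s = fun p : Fin n =>
      if h : p.val < j then s ⟨0, by omega⟩ * s ⟨p.val + 1, by omega⟩ * (s ⟨0, by omega⟩)⁻¹
      else if p.val = j then s ⟨0, by omega⟩ else s p := by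
  induction j with
  | zero =>
    funext p
    rcases p with ⟨p, hp⟩
    by_cases h : p = 0
    · subst h; simp [hurwitzAct_one']
    · simp [hurwitzAct_one', h]
  | succ j ih =>
    rw [List.range_succ, List.map_append, List.prod_append, hurwitzAct_mul', ih (by omega)]
    simp only [List.map_cons, List.map_nil, List.prod_cons, List.prod_nil, mul_one]
    rw [hurwitzAct_gen_inv j hj]
    funext p
    rcases p with ⟨p, hp⟩
    simp only [hEquiv, Equiv.symm, Equiv.coe_fn_mk]
    rcases lt_trichotomy p j with h | h | h
    · have : p ≠ j := by omega
      have : p ≠ j + 1 := by omega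
      have : p < j + 1 := by omega
      simp [*]
    · subst h
      simp
    · by_cases h' : p = j + 1
      · subst h'
        simp
      · have : p ≠ j := by omega
        have : ¬ p < j + 1 := by omega
        have : ¬ p < j := by omega
        simp [*]

/-- The right-hand side of the formula. -/
def hurwitzF {G : Type*} [Group G] {n : ℕ} (i : ℕ) (hi : i < n) (k : ℤ) (s : Fin n → G) :
    Fin n → G := fun p =>
  if p.val = 0 ∨ p.val = i then
    ((s ⟨0, by omega⟩ * s ⟨i, by omega⟩) ^ k)⁻¹ * s p *
      (s ⟨0, by omega⟩ * s ⟨i, by omega⟩) ^ k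
  else if p.val < i then
    ((s ⟨i, by omega⟩ * s ⟨0, by omega⟩) ^ (-k) *
        (s ⟨0, by omega⟩ * s ⟨i, by omega⟩) ^ k)⁻¹ * s p *
      ((s ⟨i, by omega⟩ * s ⟨0, by omega⟩) ^ (-k) *
        (s ⟨0, by omega⟩ * s ⟨i, by omega⟩) ^ k)
  else s p

theorem cWord_eq (n i : ℕ) : cWord n i =
    ((List.range (i - 1)).map (fun t => (genWord n (t + 1))⁻¹)).prod * genWord n i ^ 2 *
    (((List.range (i - 1)).map (fun t => (genWord n (t + 1))⁻¹)).prod)⁻¹ := by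
  rw [cWord, List.prod_inv_reverse, List.map_map, List.map_reverse]
  simp [Function.comp_def]

theorem hurwitzAct_cWord {G : Type*} [Group G] {n : ℕ} (s : Fin n → G) (i : ℕ)
    (h1 : 1 ≤ i) (h2 : i < n) : hurwitzAct (cWord n i) s = hurwitzF i h2 1 s := by
  obtain ⟨j, rfl⟩ : ∃ j, i = j + 1 := ⟨i - 1, by omega⟩
  rw [cWord_eq, hurwitzAct_mul', hurwitzAct_mul', pow_two, hurwitzAct_mul']
  apply hurwitzAct_inv_eq
  rw [Nat.add_sub_cancel, hurwitzAct_prefix _ j (by omega) (by omega),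
    hurwitzAct_prefix _ j (by omega) (by omega),
    hurwitzAct_gen j (by omega), hurwitzAct_gen j (by omega)]
  funext p
  rcases p with ⟨p, hp⟩
  simp only [hEquiv, Equiv.coe_fn_mk, hurwitzF]
  rcases lt_trichotomy p j with h | h | h
  · have : p ≠ j := by omega
    have : p ≠ j + 1 := by omega
    have : p < j + 1 := by omega
    simp [*]
    group
  · subst h
    simp
    group
  · by_cases h' : p = j + 1
    · subst h'
      simp
      group
    · have : p ≠ j := by omega
      have : p ≠ 0 := by omega
      have : ¬ p < j + 1 := by omega
      have : ¬ p < j := by omega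
      simp [*]

theorem hurwitzF_succ {G : Type*} [Group G] {n : ℕ} (s : Fin n → G) (i : ℕ)
    (h2 : i < n) (k : ℤ) :
    hurwitzF i h2 1 (hurwitzF i h2 k s) = hurwitzF i h2 (k + 1) s := by
  have h0 : (⟨0, by omega⟩ : Fin n).val = 0 := rfl
  funext p
  rcases p with ⟨p, hp⟩
  simp only [hurwitzF, true_or, or_true, if_true]
  generalize s ⟨0, _⟩ = a
  generalize s ⟨i, _⟩ = b
  generalize s ⟨p, _⟩ = x
  have e1 : ((a * b) ^ k)⁻¹ * a * (a * b) ^ k * (((a * b) ^ k)⁻¹ * b * (a * b) ^ k) = a * b := by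
    have : (a * b) * (a * b) ^ k = (a * b) ^ k * (a * b) :=
      ((Commute.refl (a * b)).zpow_right k).eq
    calc _ = ((a * b) ^ k)⁻¹ * ((a * b) * (a * b) ^ k) := by
          generalize (a * b) ^ k = c
          group
      _ = _ := by rw [this]; group
  have e2 : ((a * b) ^ k)⁻¹ * b * (a * b) ^ k * (((a * b) ^ k)⁻¹ * a * (a * b) ^ k)
      = ((a * b) ^ k)⁻¹ * (b * a) * (a * b) ^ k := by
    generalize (a * b) ^ k = c
    group
  rw [e1, e2]
  have e3 : (b * a) ^ (-(k + 1)) = (b * a) ^ (-k) * (b * a)⁻¹ := by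
    rw [neg_add, zpow_add, zpow_neg_one]
  rw [e3, zpow_add, zpow_one, zpow_neg_one]
  generalize (a * b) ^ k = c
  generalize (b * a) ^ (-k) = d
  by_cases hA : p = 0 ∨ p = i
  · simp only [hA, if_true, mul_inv_rev, mul_assoc]
  · by_cases hB : p < i
    · simp only [hA, hB, if_true, if_false]
      group
    · simp only [hA, hB, if_false]

theorem hurwitzF_zero {G : Type*} [Group G] {n : ℕ} (s : Fin n → G) (i : ℕ)
    (h2 : i < n) : hurwitzF i h2 0 s = s := by
  funext p
  simp [hurwitzF]

theorem hurwitzAct_cWord_zpow_aux {G : Type*} [Group G] {n : ℕ} (s : Fin n → G) (i : ℕ)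
    (h1 : 1 ≤ i) (h2 : i < n) (k : ℤ) :
    hurwitzAct (cWord n i ^ k) s = hurwitzF i h2 k s := by
  induction k using Int.induction_on with
  | zero => rw [zpow_zero, hurwitzAct_one', hurwitzF_zero]
  | succ k ih => rw [zpow_add_one, hurwitzAct_mul', ih, hurwitzAct_cWord _ i h1 h2, hurwitzF_succ]
  | pred k ih =>
    rw [zpow_sub_one, hurwitzAct_mul', ih]
    apply hurwitzAct_inv_eq
    rw [hurwitzAct_cWord _ i h1 h2, hurwitzF_succ, sub_add_cancel]

/-- The formula for the Hurwitz action of `c_i^k` on a braid system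
(entries written 0-based: `β_p = s ⟨p-1⟩`). -/
theorem hurwitzAct_cWord_zpow {m n : ℕ} (s : Fin n → BraidGroup m) (i : ℕ)
    (h1 : 1 ≤ i) (h2 : i ≤ n - 1) (k : ℤ) :
    hurwitzAct (cWord n i ^ k) s = fun p : Fin n =>
      if p.val = 0 ∨ p.val = i then
        ((s ⟨0, by omega⟩ * s ⟨i, by omega⟩) ^ k)⁻¹ * s p *
          (s ⟨0, by omega⟩ * s ⟨i, by omega⟩) ^ k
      else if p.val < i then
        ((s ⟨i, by omega⟩ * s ⟨0, by omega⟩) ^ (-k) *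
            (s ⟨0, by omega⟩ * s ⟨i, by omega⟩) ^ k)⁻¹ * s p *
          ((s ⟨i, by omega⟩ * s ⟨0, by omega⟩) ^ (-k) *
            (s ⟨0, by omega⟩ * s ⟨i, by omega⟩) ^ k)
      else s p := by
  exact hurwitzAct_cWord_zpow_aux s i h1 (by omega) k
end

section
/- Let s = (β_1,…,β_n) ∈ B_m^n be a braid system, let j be an integer with 2 < j ≤ n-1, let k be any integer, and set C = β_1β_2⋯β_{j+1}. Then s·(c_1c_2⋯c_j)^k = (β_1^{C^k}, β_2^{(β_1^{-1}C)^{-k}C^k}, …, β_{j+1}^{(β_1^{-1}C)^{-k}C^k}, β_{j+2}, …, β_n), where x^g denotes g^{-1}xg; that is, the first entry is conjugated by C^k, the entries in positions 2 through j+1 are conjugated by (β_1^{-1}C)^{-k}C^k, and the remaining entries are unchanged. -/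
section Helpers

variable {G : Type*} [Group G] {n : ℕ}

lemma hAct_mul (w v : FreeGroup (Fin (n - 1))) (s : Fin n → G) :
    hurwitzAct (w * v) s = hurwitzAct v (hurwitzAct w s) := by
  simp [hurwitzAct]

lemma hAct_one (s : Fin n → G) : hurwitzAct (1 : FreeGroup (Fin (n - 1))) s = s := by
  simp [hurwitzAct]

lemma hAct_inv_eq {w : FreeGroup (Fin (n - 1))} {s t : Fin n → G} (h : hurwitzAct w s = t) :
    hurwitzAct w⁻¹ t = s := by
  rw [← h, ← hAct_mul, mul_inv_cancel, hAct_one]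

lemma hAct_gen (i : ℕ) (hi : i + 1 < n) (f : ℕ → G) :
    hurwitzAct (genWord n (i + 1)) (fun p : Fin n => f p) =
      fun p : Fin n => if p.val = i then f (i + 1)
        else if p.val = i + 1 then (f (i + 1))⁻¹ * f i * f (i + 1) else f p := by
  have h : 1 ≤ i + 1 ∧ i + 1 ≤ n - 1 := by omega
  simp [hurwitzAct, genWord, h, hEquiv]

lemma hAct_gen_inv (i : ℕ) (hi : i + 1 < n) (f : ℕ → G) :
    hurwitzAct (genWord n (i + 1))⁻¹ (fun p : Fin n => f p) =
      fun p : Fin n => if p.val = i then f i * f (i + 1) * (f i)⁻¹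
        else if p.val = i + 1 then f i else f p := by
  apply hAct_inv_eq
  rw [hAct_gen i hi (fun p => if p = i then f i * f (i + 1) * (f i)⁻¹
        else if p = i + 1 then f i else f p)]
  funext p
  by_cases h1 : p.val = i
  · simp [h1]
  · by_cases h2 : p.val = i + 1
    · simp [h2, mul_assoc]
    · simp [h1, h2]

/-- The word `σ_1⁻¹ ⋯ σ_i⁻¹`. -/
def pWord (n i : ℕ) : FreeGroup (Fin (n - 1)) :=
  ((List.range i).map (fun t => (genWord n (t + 1))⁻¹)).prod

lemma pWord_inv (i : ℕ) :
    ((List.range i).reverse.map (fun t => genWord n (t + 1))).prod = (pWord n i)⁻¹ := by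
  induction i with
  | zero => simp [pWord]
  | succ i ih =>
    rw [pWord, List.range_succ, List.reverse_append]
    simp only [List.map_append, List.prod_append, ih, mul_inv_rev]
    simp [pWord]

lemma hAct_pWord (i : ℕ) (hi : i < n) (f : ℕ → G) :
    hurwitzAct (pWord n i) (fun p : Fin n => f p) =
      fun p : Fin n => if p.val < i then f 0 * f (p.val + 1) * (f 0)⁻¹
        else if p.val = i then f 0 else f p := by
  induction i with
  | zero =>
    simp only [pWord, List.range_zero, List.map_nil, List.prod_nil, hAct_one]
    funext p
    by_cases h : p.val = 0 <;> simp [h]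
  | succ i ih =>
    have e : pWord n (i + 1) = pWord n i * (genWord n (i + 1))⁻¹ := by
      simp [pWord, List.range_succ]
    rw [e, hAct_mul, ih (by omega), hAct_gen_inv i hi
      (fun p => if p < i then f 0 * f (p + 1) * (f 0)⁻¹ else if p = i then f 0 else f p)]
    funext p
    rcases lt_trichotomy p.val i with h | h | h
    · have a : p.val ≠ i + 1 := by omega
      simp [h, h.ne, Nat.lt_succ_of_lt h, a]
    · simp [h]
    · by_cases h2 : p.val = i + 1
      · simp [h2]
      · have a1 : ¬ p.val < i := by omega
        have a2 : ¬ p.val = i := by omega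
        have a3 : ¬ p.val < i + 1 := by omega
        simp [h2, a1, a2, a3]

lemma hAct_cWord (i : ℕ) (hi : i + 1 < n) (f : ℕ → G) :
    hurwitzAct (cWord n (i + 1)) (fun p : Fin n => f p) =
      fun p : Fin n => if p.val = 0 then (f (i + 1))⁻¹ * f 0 * f (i + 1)
        else if p.val ≤ i then
          ((f 0)⁻¹ * (f (i + 1))⁻¹ * f 0 * f (i + 1))⁻¹ * f p *
            ((f 0)⁻¹ * (f (i + 1))⁻¹ * f 0 * f (i + 1))
        else if p.val = i + 1 then (f 0 * f (i + 1))⁻¹ * f (i + 1) * (f 0 * f (i + 1))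
        else f p := by
  have e : cWord n (i + 1) =
      pWord n i * genWord n (i + 1) * genWord n (i + 1) * (pWord n i)⁻¹ := by
    rw [cWord, Nat.add_sub_cancel, pWord_inv, pow_two]
    simp only [pWord, mul_assoc]
  rw [e, hAct_mul]
  apply hAct_inv_eq
  rw [hAct_mul, hAct_mul, hAct_pWord i (by omega), hAct_gen i hi
      (fun p => if p < i then f 0 * f (p + 1) * (f 0)⁻¹ else if p = i then f 0 else f p),
    hAct_gen i hi (fun p => if p = i then
      (fun p => if p < i then f 0 * f (p + 1) * (f 0)⁻¹ else if p = i then f 0 else f p) (i + 1)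
        else if p = i + 1 then
        ((fun p => if p < i then f 0 * f (p + 1) * (f 0)⁻¹
          else if p = i then f 0 else f p) (i + 1))⁻¹ *
        (fun p => if p < i then f 0 * f (p + 1) * (f 0)⁻¹ else if p = i then f 0 else f p) i *
        (fun p => if p < i then f 0 * f (p + 1) * (f 0)⁻¹
          else if p = i then f 0 else f p) (i + 1)
        else (fun p => if p < i then f 0 * f (p + 1) * (f 0)⁻¹
          else if p = i then f 0 else f p) p),
    hAct_pWord i (by omega) (fun p => if p = 0 then (f (i + 1))⁻¹ * f 0 * f (i + 1)
        else if p ≤ i then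
          ((f 0)⁻¹ * (f (i + 1))⁻¹ * f 0 * f (i + 1))⁻¹ * f p *
            ((f 0)⁻¹ * (f (i + 1))⁻¹ * f 0 * f (i + 1))
        else if p = i + 1 then (f 0 * f (i + 1))⁻¹ * f (i + 1) * (f 0 * f (i + 1))
        else f p)]
  funext p
  rcases lt_trichotomy p.val i with h | h | h
  · have a1 : p.val + 1 ≤ i := by omega
    have a2 : p.val ≠ i + 1 := by omega
    simp [h, h.ne, a1, a2, mul_assoc]
  · simp [h, mul_assoc]
  · by_cases h2 : p.val = i + 1
    · simp [h2, mul_assoc]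
    · have a1 : ¬ p.val < i := by omega
      have a2 : ¬ p.val = i := by omega
      have a3 : ¬ p.val = 0 := by omega
      have a4 : ¬ p.val ≤ i := by omega
      simp [h2, a1, a2, a3, a4]

/-- The product `β_2 ⋯ β_{i+1}`. -/
def dProd (f : ℕ → G) (i : ℕ) : G := ((List.range i).map (fun t => f (t + 1))).prod

lemma dProd_succ (f : ℕ → G) (i : ℕ) : dProd f (i + 1) = dProd f i * f (i + 1) := by
  simp [dProd, List.range_succ]

lemma dProd_conj (f f' : ℕ → G) (g : G) (i : ℕ)
    (h : ∀ t < i, f' (t + 1) = g⁻¹ * f (t + 1) * g) : dProd f' i = g⁻¹ * dProd f i * g := by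
  induction i with
  | zero => simp [dProd]
  | succ i ih =>
    rw [dProd_succ, dProd_succ, ih (fun t ht => h t (by omega)), h i (by omega)]
    group

/-- The claimed result of acting by the `k`-th power. -/
def tForm (f : ℕ → G) (j : ℕ) (k : ℤ) (p : ℕ) : G :=
  if p = 0 then ((f 0 * dProd f j) ^ k)⁻¹ * f p * (f 0 * dProd f j) ^ k
  else if p ≤ j then
    (dProd f j ^ (-k) * (f 0 * dProd f j) ^ k)⁻¹ * f p *
      (dProd f j ^ (-k) * (f 0 * dProd f j) ^ k)
  else f p

lemma hAct_cProd (i : ℕ) (hi : i < n) (f : ℕ → G) :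
    hurwitzAct (((List.range i).map (fun t => cWord n (t + 1))).prod) (fun p : Fin n => f p) =
      fun p : Fin n => tForm f i 1 p := by
  induction i with
  | zero =>
    simp only [List.range_zero, List.map_nil, List.prod_nil, hAct_one]
    funext p
    by_cases h : p.val = 0 <;> simp [h, tForm, dProd]
  | succ i ih =>
    rw [List.range_succ, List.map_append, List.prod_append, hAct_mul, ih (by omega)]
    simp only [List.map_cons, List.map_nil, List.prod_cons, List.prod_nil, mul_one]
    rw [hAct_cWord i hi (tForm f i 1)]
    funext p
    have b : tForm f i 1 (i + 1) = f (i + 1) := by simp [tForm]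
    have b0 : tForm f i 1 0 = (dProd f i)⁻¹ * f 0 * dProd f i := by simp [tForm, mul_assoc]
    rw [b, b0]
    by_cases h0 : p.val = 0
    · simp [h0, tForm, dProd_succ, mul_assoc]
    · by_cases h : p.val ≤ i
      · have a : p.val ≤ i + 1 := by omega
        simp [h0, h, a, tForm, dProd_succ, mul_assoc]
      · by_cases h2 : p.val = i + 1
        · simp [h2, tForm, dProd_succ, mul_assoc]
        · have a : ¬ p.val ≤ i + 1 := by omega
          simp [h0, h, h2, a, tForm]

lemma tForm_tForm (f : ℕ → G) (j : ℕ) (k : ℤ) (p : ℕ) :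
    tForm (tForm f j k) j 1 p = tForm f j (k + 1) p := by
  have hd : dProd (tForm f j k) j =
      ((f 0 * dProd f j) ^ k)⁻¹ * dProd f j * (f 0 * dProd f j) ^ k := by
    rw [dProd_conj f _ (dProd f j ^ (-k) * (f 0 * dProd f j) ^ k)]
    · have : dProd f j ^ k * dProd f j * dProd f j ^ (-k) = dProd f j := by group
      calc _ = ((f 0 * dProd f j) ^ k)⁻¹ * (dProd f j ^ k * dProd f j * dProd f j ^ (-k)) *
              (f 0 * dProd f j) ^ k := by
            generalize f 0 * dProd f j = C
            group
        _ = _ := by rw [this]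
    · intro t ht
      have : t + 1 ≤ j := by omega
      simp [tForm, this]
  have h0 : tForm f j k 0 = ((f 0 * dProd f j) ^ k)⁻¹ * f 0 * (f 0 * dProd f j) ^ k := by
    simp [tForm]
  have hC : tForm f j k 0 * dProd (tForm f j k) j = f 0 * dProd f j := by
    rw [hd, h0]
    calc _ = ((f 0 * dProd f j) ^ k)⁻¹ * (f 0 * dProd f j) * (f 0 * dProd f j) ^ k := by
          generalize (f 0 * dProd f j) ^ k = C
          group
      _ = _ := by
          generalize (f 0 * dProd f j) = C
          group
  rw [tForm, hC, hd]
  by_cases hp : p = 0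
  · subst hp
    simp only [tForm, if_true]
    generalize (f 0 * dProd f j) = C
    group
  · by_cases h : p ≤ j
    · simp only [tForm, hp, h, if_true, if_false]
      generalize (f 0 * dProd f j) = C
      generalize dProd f j = D
      have : D ^ (-k) * C ^ k * (((C ^ k)⁻¹ * D * C ^ k) ^ (-1 : ℤ) * C ^ (1 : ℤ)) =
          D ^ (-(k + 1)) * C ^ (k + 1) := by
        simp only [zpow_neg, zpow_one, zpow_add, mul_inv_rev, inv_inv, mul_assoc,
          mul_inv_cancel_left]
        group
      rw [← this]
      simp only [mul_inv_rev, mul_assoc]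
    · simp [tForm, hp, h]

lemma hAct_zpow (j : ℕ) (hj : j < n) (f : ℕ → G) (k : ℤ) :
    hurwitzAct ((((List.range j).map (fun t => cWord n (t + 1))).prod) ^ k)
      (fun p : Fin n => f p) = fun p : Fin n => tForm f j k p := by
  have key : ∀ k : ℤ, hurwitzAct (((List.range j).map (fun t => cWord n (t + 1))).prod)
      (fun p : Fin n => tForm f j k p) = fun p : Fin n => tForm f j (k + 1) p := by
    intro k
    rw [hAct_cProd j hj (tForm f j k)]
    funext p
    exact tForm_tForm f j k p
  induction k using Int.induction_on with
  | zero =>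
    rw [zpow_zero, hAct_one]
    funext p
    simp [tForm]
  | succ k ih => rw [zpow_add_one, hAct_mul, ih, key]
  | pred k ih =>
    rw [zpow_sub_one, hAct_mul, ih]
    apply hAct_inv_eq
    rw [key, sub_add_cancel]

end Helpers

/-- The formula for the Hurwitz action of `(c_1 c_2 ⋯ c_j)^k` on a braid
system, for `2 < j ≤ n-1`, where `C = β_1 β_2 ⋯ β_{j+1}`
(entries written 0-based: `β_p = s ⟨p-1⟩`). -/
theorem hurwitzAct_cWord_prod_zpow {m n : ℕ} (s : Fin n → BraidGroup m) (j : ℕ)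
    (h1 : 2 < j) (h2 : j ≤ n - 1) (k : ℤ) :
    hurwitzAct ((((List.range j).map (fun t => cWord n (t + 1))).prod) ^ k) s =
      fun p : Fin n =>
        let C : BraidGroup m :=
          ((List.finRange (j + 1)).map (fun t => s (Fin.castLE (by omega) t))).prod
        if p.val = 0 then (C ^ k)⁻¹ * s p * C ^ k
        else if p.val ≤ j then
          (((s ⟨0, by omega⟩)⁻¹ * C) ^ (-k) * C ^ k)⁻¹ * s p *
            (((s ⟨0, by omega⟩)⁻¹ * C) ^ (-k) * C ^ k)
        else s p := by
  have hn : j < n := by omega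
  let f : ℕ → BraidGroup m := fun p => if h : p < n then s ⟨p, h⟩ else 1
  have hf : s = fun p : Fin n => f p := by
    funext p
    simp [f]
  have hC : ((List.finRange (j + 1)).map
      (fun t => s (Fin.castLE (by omega) t : Fin n))).prod = f 0 * dProd f j := by
    have e : (List.finRange (j + 1)).map (fun t => s (Fin.castLE (by omega) t : Fin n)) =
        (List.range (j + 1)).map f := by
      rw [← List.map_coe_finRange_eq_range, List.map_map]
      apply List.map_congr_left
      intro t _
      rw [hf]
      rfl
    rw [e, List.range_succ_eq_map, List.map_cons, List.prod_cons, List.map_map]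
    rfl
  have h0 : s ⟨0, by omega⟩ = f 0 := by
    rw [hf]
  have main := hAct_zpow j hn f k
  rw [← hf] at main
  rw [main]
  funext p
  have hp : s p = f p := by
    rw [hf]
  simp only [hC, h0, hp, tForm, inv_mul_cancel_left]
end
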